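/- Let k ≥ 1 and let ℤ/2 act on the torus 𝕋^{k} = (S^1)^{k} ⊆ ℂ^{k} by coordinatewise complex conjugation. Then the reduced rational homology of the quotient 𝕋^{k}/(ℤ/2) satisfies: H̃_d(𝕋^{k}/(ℤ/2); ℚ) has dimension binomial(k, d) if d is even and 0 < d ≤ k, and is zero otherwise. -/

import Mathlib

/-!
Write `σ` for conjugation on `T = (S¹)^k` and `q : T → T/σ` for the quotient map. Three facts are
proved by induction on `k`, simultaneously (`good_T`):

* `H_n(T)` has dimension `k.choose n`;
* `σ` acts on `H_n(T)` by `(-1)^n`;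
* `q` is surjective on `H_n` for all `n`, and injective on `H_n` for even `n`.

The theorem follows. For even `n`, `q` gives `H_n(T) ≅ H_n(T/σ)`. For odd `n`, a class of `T/σ` is
of the form `q x`, and `q x = q (σ x) = -q x`, so it vanishes (`Good.rank_even`, `Good.rank_odd`).

The induction step (`Good.step`, `Good.rank_succ`) works for any space `X` with an involution `σ`
and quotient `Q` satisfying the last two facts, and passes to `X × S¹` with the involution
`τ (x, z) = (σ x, z⁻¹)`. Cover the circle by the complements of `-1` and of `1`. Both are
`τ`-invariant and contract equivariantly to a fixed point of conjugation, so the pieces of the cover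
of `X × S¹` have the homology of `X`, and those of its quotient have the homology of `Q`. The
intersection of the pieces is the disjoint union of two copies of `X`, over the two open half
circles. They are swapped by `τ`, so its image in the quotient is a copy of `X`. The Mayer–Vietoris
connecting map identifies the kernel of `H_{n+1}(X × S¹) → H_{n+1}(X)` with the classes on the
intersection that vanish in `H_n(X)`, namely the classes `a - (-1)^n τ a` with `a ∈ H_n(X)`. There
`τ` acts by `(-1)^(n+1)`, which gives the sign and Pascal's rule for the dimensions. Comparing with
the Mayer–Vietoris sequence of the quotient gives the statement on `q`; division by two enters
here.

The Mayer–Vietoris sequence of an open cover by two sets (`Cov.bdry` and the lemmas on `Cov`) rests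
on the theorem of small simplices (`QI_small`): the simplices contained in one of the two open
sets compute singular homology. Barycentric subdivision is set up on formal affine simplices of a
standard simplex and pushed forward along singular simplices; it is homotopic to the identity, and
iterating it makes every chain small by a Lebesgue number argument.
-/

open CategoryTheory AlgebraicTopology

/-- The singular chain complex with rational coefficients of a topological space:  the
alternating face map complex of the free simplicial `ℚ`-module on the singular simplicial
set. -/
noncomputable def singularChainComplex (X : TopCat.{0}) : ChainComplex (ModuleCat ℚ) ℕ :=
  (alternatingFaceMapComplex (ModuleCat ℚ)).obj
    (((SimplicialObject.whiskering _ _).obj (ModuleCat.free ℚ)).obj (TopCat.toSSet.obj X))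

/-- The `d`-th singular homology with rational coefficients. -/
noncomputable def singularHomology (X : TopCat.{0}) (d : ℕ) : ModuleCat ℚ :=
  (singularChainComplex X).homology d

/-- The setoid on `𝕋^k = (S¹)^k` whose classes are the orbits of the `ℤ/2`-action by
coordinatewise complex conjugation (for `z` on the unit circle, `conj z = z⁻¹`, see
`Circle.coe_inv_eq_conj`). -/
def torusConjSetoid (k : ℕ) : Setoid (Fin k → Circle) where
  r x y := y = x ∨ y = fun i => (x i)⁻¹
  iseqv := by
    constructor
    · intro x; exact Or.inl rfl
    · rintro x y (rfl | rfl)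
      · exact Or.inl rfl
      · exact Or.inr (by funext i; simp)
    · rintro x y z (rfl | rfl) (rfl | rfl)
      · exact Or.inl rfl
      · exact Or.inr rfl
      · exact Or.inr rfl
      · exact Or.inl (by funext i; simp)

namespace TorusConj

/-! ### Subdivision of formal simplices -/

/-- Formal rational combinations of `m`-tuples of points of `S`, thought of as affine simplices with
`m` vertices. Counting vertices makes `Tup S 0` (the augmentation) available as a base case. -/
abbrev Tup (S : Type) (m : ℕ) : Type := (Fin m → S) →₀ ℚ

/-- The boundary of formal simplices. -/
noncomputable def bd {S : Type} (m : ℕ) : Tup S (m + 1) →ₗ[ℚ] Tup S m :=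
  ∑ i : Fin (m + 1), (-1 : ℚ) ^ (i : ℕ) • Finsupp.lmapDomain ℚ ℚ (fun v => v ∘ i.succAbove)

/-- The join with a point `x`, added as the first vertex. -/
noncomputable def cone {S : Type} (x : S) (m : ℕ) : Tup S m →ₗ[ℚ] Tup S (m + 1) :=
  Finsupp.lmapDomain ℚ ℚ (fun v : Fin m → S => (Fin.cons x v : Fin (m + 1) → S))

lemma bd_single {S : Type} (m : ℕ) (v : Fin (m + 1) → S) (r : ℚ) :
    bd m (Finsupp.single v r) =
      ∑ i : Fin (m + 1), (-1 : ℚ) ^ (i : ℕ) • Finsupp.single (v ∘ i.succAbove) r := by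
  simp [bd, LinearMap.sum_apply]

lemma cone_single {S : Type} (x : S) (m : ℕ) (v : Fin m → S) (r : ℚ) :
    cone x m (Finsupp.single v r) = Finsupp.single (Fin.cons x v : Fin (m + 1) → S) r := by
  simp [cone]

lemma bd_cone_zero {S : Type} (x : S) (c : Tup S 0) : bd 0 (cone x 0 c) = c := by
  induction c using Finsupp.induction_linear with
  | zero => simp
  | add f g hf hg => simp only [map_add, hf, hg]
  | single v r =>
    rw [cone_single, bd_single]
    simp [Subsingleton.elim _ v]

lemma bd_cone {S : Type} (x : S) (m : ℕ) (c : Tup S (m + 1)) :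
    bd (m + 1) (cone x (m + 1) c) = c - cone x m (bd m c) := by
  induction c using Finsupp.induction_linear with
  | zero => simp
  | add f g hf hg => simp only [map_add, hf, hg]; abel
  | single v r =>
    rw [cone_single, bd_single, bd_single, Fin.sum_univ_succ, map_sum, sub_eq_add_neg,
      ← Finset.sum_neg_distrib]
    congr 1
    · simp only [Fin.val_zero, pow_zero, one_smul]
      congr 1
    · refine Finset.sum_congr rfl fun i _ => ?_
      rw [map_smul, cone_single, Fin.val_succ, pow_succ, mul_neg_one, neg_smul]
      congr 3
      funext j
      refine Fin.cases ?_ (fun j => ?_) j <;> simp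

lemma bd_bd {S : Type} (m : ℕ) (c : Tup S (m + 2)) : bd m (bd (m + 1) c) = 0 := by
  induction c using Finsupp.induction_linear with
  | zero => simp
  | add f g hf hg => simp only [map_add, hf, hg, add_zero]
  | single v r =>
    induction m with
    | zero =>
      rw [← Fin.cons_self_tail v, ← cone_single, bd_cone, map_sub, bd_cone_zero, sub_self]
    | succ m ih =>
      rw [← Fin.cons_self_tail v, ← cone_single, bd_cone, map_sub, bd_cone, ih]
      simp

variable {S : Type} (b : ∀ m : ℕ, (Fin (m + 1) → S) → S)

/-- Barycentric subdivision of formal simplices, with respect to an arbitrary choice `b` of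
barycenters: the cone from the barycenter on the subdivision of the boundary. -/
noncomputable def sd : ∀ m : ℕ, Tup S m →ₗ[ℚ] Tup S m
  | 0 => LinearMap.id
  | m + 1 => Finsupp.linearCombination ℚ fun v => cone (b m v) m (sd m (bd m (Finsupp.single v 1)))

/-- The chain homotopy between the identity and barycentric subdivision, see `bd_hT`. -/
noncomputable def hT : ∀ m : ℕ, Tup S m →ₗ[ℚ] Tup S (m + 1)
  | 0 => 0
  | m + 1 => Finsupp.linearCombination ℚ fun v =>
      cone (b m v) (m + 1) (Finsupp.single v 1 - hT m (bd m (Finsupp.single v 1)))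

lemma sd_single (m : ℕ) (v : Fin (m + 1) → S) :
    sd b (m + 1) (Finsupp.single v 1) = cone (b m v) m (sd b m (bd m (Finsupp.single v 1))) := by
  simp [sd]

lemma hT_single (m : ℕ) (v : Fin (m + 1) → S) :
    hT b (m + 1) (Finsupp.single v 1) =
      cone (b m v) (m + 1) (Finsupp.single v 1 - hT b m (bd m (Finsupp.single v 1))) := by
  simp [hT]

/-- Linear maps out of a free module agree once they agree on basis vectors. -/
lemma lin_ext {α M : Type*} [AddCommGroup M] [Module ℚ M] {f g : (α →₀ ℚ) →ₗ[ℚ] M}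
    (h : ∀ a, f (Finsupp.single a 1) = g (Finsupp.single a 1)) (c : α →₀ ℚ) : f c = g c := by
  have : f = g := Finsupp.lhom_ext' fun a => LinearMap.ext_ring (h a)
  rw [this]

lemma bd_sd (m : ℕ) (c : Tup S (m + 1)) : bd m (sd b (m + 1) c) = sd b m (bd m c) := by
  refine lin_ext (f := bd m ∘ₗ sd b (m + 1)) (g := sd b m ∘ₗ bd m) (fun v => ?_) c
  simp only [LinearMap.comp_apply]
  rw [sd_single]
  cases m with
  | zero => rw [bd_cone_zero]
  | succ m => rw [bd_cone, bd_sd m, bd_bd, map_zero, map_zero, sub_zero]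

lemma bd_hT_zero (c : Tup S 0) : bd 0 (hT b 0 c) = 0 := by simp [hT]

lemma bd_hT (m : ℕ) (c : Tup S (m + 1)) :
    bd (m + 1) (hT b (m + 1) c) + hT b m (bd m c) = c - sd b (m + 1) c := by
  refine lin_ext (f := bd (m + 1) ∘ₗ hT b (m + 1) + hT b m ∘ₗ bd m)
    (g := LinearMap.id - sd b (m + 1)) (fun v => ?_) c
  simp only [LinearMap.comp_apply, LinearMap.add_apply, LinearMap.sub_apply, LinearMap.id_apply]
  rw [hT_single, sd_single, bd_cone]
  have key : bd m (hT b m (bd m (Finsupp.single v 1))) =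
      bd m (Finsupp.single v 1) - sd b m (bd m (Finsupp.single v 1)) := by
    cases m with
    | zero => rw [bd_hT_zero]; simp [sd]
    | succ m =>
      have := bd_hT m (bd (m + 1) (Finsupp.single v 1))
      rwa [bd_bd, map_zero, add_zero] at this
  rw [map_sub, key]
  simp only [map_sub]
  abel

end TorusConj

namespace TorusConj

section
variable {S' S : Type}

/-- The action of a map of sets on formal simplices. -/
noncomputable def mapT (f : S → S') (m : ℕ) : Tup S m →ₗ[ℚ] Tup S' m :=
  Finsupp.lmapDomain ℚ ℚ (fun v : Fin m → S => f ∘ v)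

lemma mapT_single (f : S → S') (m : ℕ) (v : Fin m → S) (r : ℚ) :
    mapT f m (Finsupp.single v r) = Finsupp.single (f ∘ v) r := by
  simp [mapT]

lemma mapT_bd (f : S → S') (m : ℕ) (c : Tup S (m + 1)) :
    mapT f m (bd m c) = bd m (mapT f (m + 1) c) := by
  refine lin_ext (f := mapT f m ∘ₗ bd m) (g := bd m ∘ₗ mapT f (m + 1)) (fun v => ?_) c
  simp only [LinearMap.comp_apply, mapT_single, bd_single, map_sum, map_smul]
  rfl

lemma mapT_cone (f : S → S') (x : S) (m : ℕ) (c : Tup S m) :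
    mapT f (m + 1) (cone x m c) = cone (f x) m (mapT f m c) := by
  refine lin_ext (f := mapT f (m + 1) ∘ₗ cone x m) (g := cone (f x) m ∘ₗ mapT f m) (fun v => ?_) c
  simp only [LinearMap.comp_apply, mapT_single, cone_single]
  congr 1
  funext j
  refine Fin.cases ?_ (fun j => ?_) j <;> simp

variable {b' : ∀ m : ℕ, (Fin (m + 1) → S') → S'} {b : ∀ m : ℕ, (Fin (m + 1) → S) → S}

/-- Subdivision is natural for maps that preserve barycenters. -/
lemma mapT_sd (f : S → S') (hf : ∀ m v, f (b m v) = b' m (f ∘ v)) (m : ℕ) (c : Tup S m) :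
    mapT f m (sd b m c) = sd b' m (mapT f m c) := by
  refine lin_ext (f := mapT f m ∘ₗ sd b m) (g := sd b' m ∘ₗ mapT f m) (fun v => ?_) c
  simp only [LinearMap.comp_apply]
  cases m with
  | zero => simp [sd]
  | succ m =>
    rw [sd_single, mapT_cone, mapT_sd f hf m, mapT_bd, mapT_single, sd_single, hf]

lemma mapT_hT (f : S → S') (hf : ∀ m v, f (b m v) = b' m (f ∘ v)) (m : ℕ) (c : Tup S m) :
    mapT f (m + 1) (hT b m c) = hT b' m (mapT f m c) := by
  refine lin_ext (f := mapT f (m + 1) ∘ₗ hT b m) (g := hT b' m ∘ₗ mapT f m) (fun v => ?_) c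
  simp only [LinearMap.comp_apply]
  cases m with
  | zero => simp [hT]
  | succ m =>
    rw [hT_single, mapT_cone, map_sub, mapT_hT f hf m, mapT_bd, mapT_single, hT_single, hf]

end

lemma lin_supported {α β : Type*} {f : (α →₀ ℚ) →ₗ[ℚ] (β →₀ ℚ)} {A : Set α} {B : Set β}
    (h : ∀ a ∈ A, f (Finsupp.single a 1) ∈ Finsupp.supported ℚ ℚ B) {c : α →₀ ℚ}
    (hc : c ∈ Finsupp.supported ℚ ℚ A) : f c ∈ Finsupp.supported ℚ ℚ B := by
  rw [Finsupp.supported_eq_span_single] at hc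
  have : Submodule.span ℚ ((fun i => Finsupp.single i (1 : ℚ)) '' A) ≤
      (Finsupp.supported ℚ ℚ B).comap f := by
    rw [Submodule.span_le]
    rintro _ ⟨a, ha, rfl⟩
    exact h a ha
  exact this hc

/-! ### Affine simplices in a standard simplex and their diameters -/

section
variable {ι κ μ : Type} [Fintype ι] [Fintype κ] [Fintype μ]

/-- The affine map of standard simplices with prescribed values `v` on the vertices. -/
noncomputable def comb (v : κ → stdSimplex ℝ ι) (t : stdSimplex ℝ κ) : stdSimplex ℝ ι :=
  ⟨∑ k, t k • (v k : ι → ℝ), (convex_stdSimplex ℝ ι).sum_mem (fun k _ => t.2.1 k) t.2.2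
    fun k _ => (v k).2⟩

lemma coe_comb (v : κ → stdSimplex ℝ ι) (t : stdSimplex ℝ κ) :
    (comb v t : ι → ℝ) = ∑ k, t k • (v k : ι → ℝ) := rfl

lemma comb_apply (v : κ → stdSimplex ℝ ι) (t : stdSimplex ℝ κ) (i : ι) :
    comb v t i = ∑ k, t k * v k i := by
  exact (congrFun (coe_comb v t) i).trans (Finset.sum_apply _ _ _)

lemma continuous_comb (v : κ → stdSimplex ℝ ι) : Continuous (comb v) := by
  refine Continuous.subtype_mk ?_ _
  have h (k : κ) : Continuous fun t : stdSimplex ℝ κ => (t : κ → ℝ) k :=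
    (continuous_apply k).comp continuous_subtype_val
  exact continuous_finsetSum _ fun k _ => (h k).smul continuous_const

lemma comb_comb (v : κ → stdSimplex ℝ ι) (w : μ → stdSimplex ℝ κ) (t : stdSimplex ℝ μ) :
    comb v (comb w t) = comb (comb v ∘ w) t := by
  ext i
  simp only [comb_apply, Function.comp, Finset.sum_mul, Finset.mul_sum]
  rw [Finset.sum_comm]
  simp only [mul_assoc]

lemma comb_vertex [DecidableEq κ] (t : stdSimplex ℝ κ) :
    comb (fun k => stdSimplex.vertex (S := ℝ) k) t = t := by
  ext i
  rw [comb_apply]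
  simp [Pi.single_apply]

lemma map_eq_comb [DecidableEq ι] (f : κ → ι) (t : stdSimplex ℝ κ) :
    stdSimplex.map f t = comb (fun k => stdSimplex.vertex (S := ℝ) (f k)) t := by
  classical
  ext i
  rw [comb_apply, stdSimplex.map_coe]
  simp only [FunOnFinite.linearMap_apply_apply, stdSimplex.vertex_coe, Pi.single_apply]
  simp [Finset.sum_filter, eq_comm]

/-- Barycenters in a standard simplex. -/
noncomputable def bary (m : ℕ) (v : Fin (m + 1) → stdSimplex ℝ ι) : stdSimplex ℝ ι :=
  comb v stdSimplex.barycenter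

lemma comb_bary (v : κ → stdSimplex ℝ ι) (m : ℕ) (w : Fin (m + 1) → stdSimplex ℝ κ) :
    comb v (bary m w) = bary m (comb v ∘ w) := comb_comb _ _ _

lemma comb_mem_convexHull (v : κ → stdSimplex ℝ ι) (t : stdSimplex ℝ κ) :
    (comb v t : ι → ℝ) ∈ convexHull ℝ (Set.range fun k => (v k : ι → ℝ)) :=
  (convex_convexHull ℝ _).sum_mem (fun k _ => t.2.1 k) t.2.2
    fun k _ => subset_convexHull _ _ ⟨k, rfl⟩

/-- The distance from a vertex to the barycenter of `m + 1` points of diameter at most `D` is at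
most `m / (m + 1) * D`. -/
lemma dist_bary (m : ℕ) (v : Fin (m + 1) → stdSimplex ℝ ι) (D : ℝ)
    (hv : ∀ i j, dist (v i) (v j) ≤ D) (i : Fin (m + 1)) :
    dist (v i : ι → ℝ) (bary m v) ≤ m / (m + 1) * D := by
  have hm : (0 : ℝ) < m + 1 := by positivity
  have h1 : (v i : ι → ℝ) - bary m v =
      (m + 1 : ℝ)⁻¹ • ∑ j ∈ Finset.univ.erase i, ((v i : ι → ℝ) - v j) := by
    rw [Finset.sum_erase _ (by simp), bary, coe_comb, Finset.sum_sub_distrib, smul_sub]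
    congr 1
    · simp only [Finset.sum_const, Finset.card_univ, Fintype.card_fin, ← Nat.cast_smul_eq_nsmul ℝ,
        smul_smul]
      push_cast
      rw [inv_mul_cancel₀ hm.ne', one_smul]
    · rw [Finset.smul_sum]
      refine Finset.sum_congr rfl fun j _ => ?_
      congr 1
      exact (stdSimplex.barycenter_apply j).trans (by simp)
  rw [dist_eq_norm, h1, norm_smul, Real.norm_eq_abs, abs_of_pos (inv_pos.2 hm)]
  have h2 : ‖∑ j ∈ Finset.univ.erase i, ((v i : ι → ℝ) - v j)‖ ≤ m * D := by
    refine (norm_sum_le_of_le (f := fun j => (v i : ι → ℝ) - v j) _ (n := fun _ => D) fun j _ => ?_).trans ?_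
    · rw [← dist_eq_norm]; exact hv i j
    · simp
  calc _ ≤ (m + 1 : ℝ)⁻¹ * (m * D) := by gcongr
    _ = _ := by ring

/-- Subdividing a simplex of dimension at most `N` and diameter at most `D` yields simplices of
diameter at most `N / (N + 1) * D`. The convex set `K` carries through the induction that they lie
in the convex hull of the given vertices; vertex distances are taken in the sup norm. -/
lemma sd_small (N m : ℕ) (v : Fin m → stdSimplex ℝ ι) (D : ℝ) (hD : 0 ≤ D) (K : Set (ι → ℝ))
    (hK : Convex ℝ K) (hvK : ∀ i, (v i : ι → ℝ) ∈ K) (hv : ∀ i j, dist (v i) (v j) ≤ D)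
    (hm : m ≤ N + 1) :
    sd bary m (Finsupp.single v 1) ∈ Finsupp.supported ℚ ℚ {w : Fin m → stdSimplex ℝ ι |
      (∀ i, (w i : ι → ℝ) ∈ K) ∧ ∀ i j, dist (w i) (w j) ≤ (N / (N + 1) : ℝ) * D} := by
  induction m generalizing K with
  | zero =>
    refine Finsupp.single_mem_supported ℚ 1 ⟨fun i => i.elim0, fun i => i.elim0⟩
  | succ m ih =>
    rw [sd_single, bd_single, map_sum, map_sum]
    refine Submodule.sum_mem _ fun i _ => ?_
    rw [map_smul, map_smul]
    refine Submodule.smul_mem _ _ ?_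
    set C := convexHull ℝ (Set.range fun k => (v k : ι → ℝ)) with hC
    have hCK : C ⊆ K := convexHull_min (by rintro _ ⟨k, rfl⟩; exact hvK k) hK
    have hr : (m / (m + 1) : ℝ) ≤ N / (N + 1) := by
      rw [div_le_div_iff₀ (by positivity) (by positivity)]
      have : (m : ℝ) ≤ N := by exact_mod_cast Nat.le_of_succ_le_succ hm
      nlinarith
    have hball : C ⊆ Metric.closedBall (bary m v : ι → ℝ) (N / (N + 1) * D) := by
      refine convexHull_min ?_ (convex_closedBall _ _)
      rintro _ ⟨k, rfl⟩
      exact (dist_bary m v D hv k).trans (by gcongr)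
    refine lin_supported (f := cone (bary m v) m) ?_ (ih (v ∘ i.succAbove) C (convex_convexHull _ _)
      (fun j => subset_convexHull _ _ ⟨_, rfl⟩) (fun _ _ => hv _ _) (by omega))
    rintro w ⟨hwC, hw⟩
    rw [cone_single]
    refine Finsupp.single_mem_supported ℚ 1 ⟨?_, ?_⟩
    · intro j
      refine Fin.cases ?_ (fun j => ?_) j
      · exact hCK (comb_mem_convexHull _ _)
      · exact hCK (hwC j)
    · intro j k
      have h0 : 0 ≤ (N / (N + 1) : ℝ) * D := by positivity
      refine Fin.cases ?_ (fun j => ?_) j <;> refine Fin.cases ?_ (fun k => ?_) k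
      · simpa using h0
      · simp only [Fin.cons_zero, Fin.cons_succ]
        rw [dist_comm]
        exact hball (hwC k)
      · simp only [Fin.cons_zero, Fin.cons_succ]
        exact hball (hwC j)
      · simpa using hw j k

lemma sd_iter_small (N m : ℕ) (hm : m ≤ N + 1) (D : ℝ) (hD : 0 ≤ D) (j : ℕ) (c : Tup (stdSimplex ℝ ι) m)
    (hc : c ∈ Finsupp.supported ℚ ℚ {w : Fin m → stdSimplex ℝ ι | ∀ i j, dist (w i) (w j) ≤ D}) :
    (sd bary m ^ j) c ∈ Finsupp.supported ℚ ℚ {w : Fin m → stdSimplex ℝ ι |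
      ∀ i k, dist (w i) (w k) ≤ (N / (N + 1) : ℝ) ^ j * D} := by
  induction j with
  | zero => simpa using! hc
  | succ j ih =>
    rw [pow_succ' (sd bary m), Module.End.mul_apply]
    refine lin_supported (fun w hw => ?_) ih
    refine Finsupp.supported_mono ?_ (sd_small N m w _ (by positivity) Set.univ convex_univ
      (fun _ => trivial) hw hm)
    rintro u ⟨-, hu⟩ i k
    rw [pow_succ', mul_assoc]
    exact hu i k

/-- Iterated barycentric subdivision makes the standard simplex subordinate to an open cover. -/
lemma exists_sd_subordinate (n : ℕ) (A B : Set (stdSimplex ℝ (Fin (n + 1)))) (hA : IsOpen A)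
    (hB : IsOpen B) (hAB : A ∪ B = Set.univ) :
    ∃ j : ℕ, (sd bary (n + 1) ^ j) (Finsupp.single (fun k => stdSimplex.vertex (S := ℝ) k) 1) ∈
      Finsupp.supported ℚ ℚ {w : Fin (n + 1) → stdSimplex ℝ (Fin (n + 1)) |
        (∀ t : stdSimplex ℝ (Fin (n + 1)), comb w t ∈ A) ∨
        (∀ t : stdSimplex ℝ (Fin (n + 1)), comb w t ∈ B)} := by
  obtain ⟨δ, hδ, h⟩ := lebesgue_number_lemma_of_metric (s := Set.univ) (c := fun i : Bool => cond i A B)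
    isCompact_univ (by rintro (_ | _) <;> assumption) (by
      intro x _
      have : x ∈ A ∪ B := hAB ▸ trivial
      rcases this with h | h
      · exact Set.mem_iUnion.2 ⟨true, h⟩
      · exact Set.mem_iUnion.2 ⟨false, h⟩)
  set D := Metric.diam (Set.univ : Set (stdSimplex ℝ (Fin (n + 1))))
  have hlim : Filter.Tendsto (fun j : ℕ => (n / (n + 1) : ℝ) ^ j * D) Filter.atTop (nhds (0 * D)) :=
    (tendsto_pow_atTop_nhds_zero_of_lt_one (by positivity)
      (by rw [div_lt_one (by positivity)]; linarith)).mul_const D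
  rw [zero_mul] at hlim
  obtain ⟨j, hj⟩ := (hlim.eventually (gt_mem_nhds hδ)).exists
  refine ⟨j, Finsupp.supported_mono ?_ (sd_iter_small n (n + 1) le_rfl D Metric.diam_nonneg j _
    (Finsupp.single_mem_supported ℚ 1 fun i k => Metric.dist_le_diam_of_mem
      isCompact_univ.isBounded trivial trivial))⟩
  intro w hw
  have key : ∀ t, comb w t ∈ Metric.ball (w 0) δ := by
    intro t
    have : convexHull ℝ (Set.range fun k => (w k : Fin (n + 1) → ℝ)) ⊆
        Metric.ball (w 0 : Fin (n + 1) → ℝ) δ := by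
      refine convexHull_min ?_ (convex_ball _ _)
      rintro _ ⟨k, rfl⟩
      exact lt_of_le_of_lt (hw k 0) hj
    exact this (comb_mem_convexHull w t)
  obtain ⟨i, hi⟩ := h (w 0) trivial
  cases i
  · exact Or.inr fun t => hi (key t)
  · exact Or.inl fun t => hi (key t)

end
end TorusConj

namespace TorusConj
open Limits Opposite Simplicial

/-! ### Chains and homology of simplicial sets -/

/-- The chain complex of rational simplicial chains on a simplicial set. -/
noncomputable def FC : SSet.{0} ⥤ ChainComplex (ModuleCat.{0} ℚ) ℕ :=
  (SimplicialObject.whiskering _ _).obj (ModuleCat.free ℚ) ⋙ alternatingFaceMapComplex _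

lemma singularChainComplex_eq (X : TopCat.{0}) :
    singularChainComplex X = FC.obj (TopCat.toSSet.obj X) := rfl

/-- The module of `n`-chains. -/
abbrev Ch (K : SSet.{0}) (n : ℕ) : Type := (K.obj (op ⦋n⦌)) →₀ ℚ

/-- The differential of simplicial chains, as a linear map. -/
noncomputable def dd (K : SSet.{0}) (n : ℕ) : Ch K (n + 1) →ₗ[ℚ] Ch K n :=
  ∑ i : Fin (n + 2), (-1 : ℚ) ^ (i : ℕ) • Finsupp.lmapDomain ℚ ℚ
    (fun a => K.δ i a : K.obj (op ⦋n + 1⦌) → K.obj (op ⦋n⦌))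

lemma objD_apply (M : SimplicialObject (ModuleCat.{0} ℚ)) (n : ℕ) (x : M.obj (op ⦋n + 1⦌)) :
    (AlternatingFaceMapComplex.objD M n).hom x =
      ∑ i : Fin (n + 2), (-1 : ℚ) ^ (i : ℕ) • (M.δ i).hom x := by
  rw [AlternatingFaceMapComplex.objD, ModuleCat.hom_sum, LinearMap.sum_apply]
  refine Finset.sum_congr rfl fun i _ => ?_
  rw [← Int.cast_smul_eq_zsmul ℚ, ModuleCat.hom_smul, LinearMap.smul_apply]
  push_cast
  rfl

lemma FC_d_apply (K : SSet.{0}) (n : ℕ) (c : Ch K (n + 1)) :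
    ((FC.obj K).d (n + 1) n).hom c = dd K n c := by
  have key : (FC.obj K).d (n + 1) n = AlternatingFaceMapComplex.objD
      (((SimplicialObject.whiskering _ _).obj (ModuleCat.free ℚ)).obj K) n :=
    alternatingFaceMapComplex_obj_d _ _
  refine (LinearMap.congr_fun (congrArg ModuleCat.Hom.hom key) c).trans ?_
  refine (objD_apply _ n _).trans ?_
  rw [dd, LinearMap.sum_apply]
  rfl

lemma FC_f_apply {K L : SSet.{0}} (f : K ⟶ L) (n : ℕ) (c : Ch K n) :
    ((FC.map f).f n).hom c = Finsupp.mapDomain (f.app (op ⦋n⦌)) c := rfl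

/-- Homology of a simplicial set. -/
noncomputable abbrev HH (K : SSet.{0}) (n : ℕ) : ModuleCat.{0} ℚ := (FC.obj K).homology n

/-- The map induced on homology. -/
noncomputable def Hm {K L : SSet.{0}} (f : K ⟶ L) (n : ℕ) : HH K n →ₗ[ℚ] HH L n :=
  (HomologicalComplex.homologyMap (FC.map f) n).hom

lemma Hm_id {K : SSet.{0}} (n : ℕ) (x : HH K n) : Hm (𝟙 K) n x = x := by simp [Hm]

lemma Hm_comp {K L M : SSet.{0}} (f : K ⟶ L) (g : L ⟶ M) (n : ℕ) (x : HH K n) :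
    Hm (f ≫ g) n x = Hm g n (Hm f n x) := by
  simp [Hm, HomologicalComplex.homologyMap_comp]

/-- `f` induces isomorphisms on rational homology. -/
def QI {K L : SSet.{0}} (f : K ⟶ L) : Prop := QuasiIso (FC.map f)

lemma QI.bij {K L : SSet.{0}} {f : K ⟶ L} (h : QI f) (n : ℕ) : Function.Bijective (Hm f n) := by
  have : QuasiIso (FC.map f) := h
  exact (ConcreteCategory.isIso_iff_bijective (HomologicalComplex.homologyMap (FC.map f) n)).1
    inferInstance

lemma quasiIso_of_bij {C D : ChainComplex (ModuleCat.{0} ℚ) ℕ} (f : C ⟶ D)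
    (h : ∀ n, Function.Bijective (HomologicalComplex.homologyMap f n).hom) : QuasiIso f := by
  rw [quasiIso_iff]
  intro n
  rw [quasiIsoAt_iff_isIso_homologyMap]
  exact (ConcreteCategory.isIso_iff_bijective _).2 (h n)

lemma QI.comp {K L M : SSet.{0}} {f : K ⟶ L} {g : L ⟶ M} (hf : QI f) (hg : QI g) :
    QI (f ≫ g) := by
  have : QuasiIso (FC.map f) := hf
  have : QuasiIso (FC.map g) := hg
  rw [QI, Functor.map_comp]
  infer_instance

lemma QI.of_comp_left {K L M : SSet.{0}} {f : K ⟶ L} {g : L ⟶ M} (hf : QI f) (h : QI (f ≫ g)) :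
    QI g := by
  have : QuasiIso (FC.map f) := hf
  rw [QI, Functor.map_comp] at h
  exact (quasiIso_iff_comp_left _ _).1 h

lemma QI.of_comp_right {K L M : SSet.{0}} {f : K ⟶ L} {g : L ⟶ M} (hg : QI g) (h : QI (f ≫ g)) :
    QI f := by
  have : QuasiIso (FC.map g) := hg
  rw [QI, Functor.map_comp] at h
  exact (quasiIso_iff_comp_right _ _).1 h

lemma QI.of_isIso {K L : SSet.{0}} (f : K ⟶ L) [IsIso f] : QI f := by
  rw [QI]; infer_instance

lemma QI.of_bijective {K L : SSet.{0}} (f : K ⟶ L)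
    (h : ∀ n : ℕ, Function.Bijective (f.app (op ⦋n⦌))) : QI f := by
  have : IsIso f := by
    rw [NatTrans.isIso_iff_isIso_app]
    rintro ⟨n⟩
    exact (isIso_iff_bijective _).2 (h n.len)
  exact QI.of_isIso f

/-- A degreewise injective chain map is a quasi-isomorphism as soon as every relative cycle is,
up to a boundary, in its image. -/
lemma quasiIso_of_relative {C D : ChainComplex (ModuleCat.{0} ℚ) ℕ} (f : C ⟶ D)
    (hf : ∀ n, Function.Injective (f.f n).hom)
    (h : ∀ (n : ℕ) (x : D.X n), (∀ j, (D.d n j).hom x ∈ LinearMap.range (f.f j).hom) →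
      ∃ y : D.X (n + 1), x - (D.d (n + 1) n).hom y ∈ LinearMap.range (f.f n).hom) :
    QuasiIso f := by
  have hmono : Mono f := by
    have : ∀ n, Mono (f.f n) := fun n => (ModuleCat.mono_iff_injective _).2 (hf n)
    exact HomologicalComplex.mono_of_mono_f f this
  let S : ShortComplex (ChainComplex (ModuleCat.{0} ℚ) ℕ) :=
    ShortComplex.mk f (cokernel.π f) (cokernel.condition f)
  have hS : S.ShortExact :=
    { exact := ShortComplex.exact_of_g_is_cokernel _ (cokernelIsCokernel f)
      mono_f := hmono
      epi_g := by dsimp [S]; infer_instance }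
  have hex (n : ℕ) : (S.map (HomologicalComplex.eval _ _ n)).ShortExact :=
    hS.map_of_exact (HomologicalComplex.eval _ _ n)
  have hsurj (n : ℕ) : Function.Surjective (S.g.f n).hom :=
    (ModuleCat.epi_iff_surjective _).1 (hex n).epi_g
  have hker (n : ℕ) (x : D.X n) : (S.g.f n).hom x = 0 ↔ x ∈ LinearMap.range (f.f n).hom := by
    have := (ShortComplex.moduleCat_exact_iff_ker_sub_range _).1 (hex n).exact
    refine ⟨fun hx => this hx, ?_⟩
    rintro ⟨y, rfl⟩
    exact congrArg (fun φ : S.X₁ ⟶ S.X₃ => (φ.f n).hom y) S.zero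
  have hcomm (i j : ℕ) (x : D.X i) :
      (S.g.f j).hom ((D.d i j).hom x) = (S.X₃.d i j).hom ((S.g.f i).hom x) := by
    exact (LinearMap.congr_fun (congrArg ModuleCat.Hom.hom (S.g.comm i j)) x).symm
  have hac : S.X₃.Acyclic := by
    intro n
    rw [HomologicalComplex.exactAt_iff' _ (n + 1) n _ (by simp) rfl,
      ShortComplex.moduleCat_exact_iff]
    intro z hz
    obtain ⟨x, rfl⟩ := hsurj n z
    obtain ⟨y, hy⟩ := h n x (fun j => by
      by_cases hj : (ComplexShape.down ℕ).Rel n j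
      · obtain rfl := (ComplexShape.down ℕ).next_eq' hj
        rw [← hker, hcomm]
        exact hz
      · rw [D.shape _ _ hj]; exact Submodule.zero_mem _)
    refine ⟨(S.g.f (n + 1)).hom y, ?_⟩
    have h1 := (hker n _).2 hy
    rw [map_sub, sub_eq_zero, hcomm] at h1
    exact h1.symm
  refine quasiIso_of_bij f fun n => ⟨?_, ?_⟩
  · have h1 := hS.homology_exact₁ (n + 1) n (by simp)
    have h2 := (ShortComplex.moduleCat_exact_iff _).1 h1
    rw [injective_iff_map_eq_zero]
    intro x hx
    obtain ⟨z, rfl⟩ := h2 x hx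
    have hz : IsZero (S.X₃.homology (n + 1)) := (hac (n + 1)).isZero_homology
    have := ModuleCat.subsingleton_of_isZero hz
    rw [Subsingleton.elim z 0, map_zero]
  · have h2 := (ShortComplex.moduleCat_exact_iff _).1 (hS.homology_exact₂ n)
    intro x
    have hz : IsZero (S.X₃.homology n) := (hac n).isZero_homology
    have := ModuleCat.subsingleton_of_isZero hz
    exact h2 x (Subsingleton.elim _ _)


/-! ### Small simplices -/

section
variable {X : TopCat.{0}}

/-- Singular simplices. -/
abbrev Sx (X : TopCat.{0}) (n : ℕ) : Type := (TopCat.toSSet.obj X).obj (op ⦋n⦌)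

/-- Singular simplices as continuous maps. -/
noncomputable def ev {n : ℕ} : Sx X n ≃ C(stdSimplex ℝ (Fin (n + 1)), X) :=
  X.toSSetObjEquiv (op ⦋n⦌)

/-- The composite of a singular simplex with an affine map of standard simplices. -/
noncomputable def resx {n m : ℕ} (a : Sx X n) (w : Fin (m + 1) → stdSimplex ℝ (Fin (n + 1))) :
    Sx X m :=
  ev.symm ((ev a).comp ⟨comb w, continuous_comb w⟩)

lemma ev_resx {n m : ℕ} (a : Sx X n) (w : Fin (m + 1) → stdSimplex ℝ (Fin (n + 1)))
    (t : stdSimplex ℝ (Fin (m + 1))) : ev (resx a w) t = ev a (comb w t) := by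
  simp [resx]

lemma sx_ext {n : ℕ} {a b : Sx X n} (h : ∀ t, ev a t = ev b t) : a = b :=
  ev.injective (ContinuousMap.ext h)

lemma resx_resx {n m l : ℕ} (a : Sx X n) (w : Fin (m + 1) → stdSimplex ℝ (Fin (n + 1)))
    (u : Fin (l + 1) → stdSimplex ℝ (Fin (m + 1))) :
    resx (resx a w) u = resx a (comb w ∘ u) := by
  refine sx_ext fun t => ?_
  simp only [ev_resx, comb_comb]

lemma resx_vertex {n : ℕ} (a : Sx X n) :
    resx a (fun k => stdSimplex.vertex (S := ℝ) k) = a := by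
  refine sx_ext fun t => ?_
  rw [ev_resx, comb_vertex]

lemma comb_at_vertex {ι κ : Type} [Fintype ι] [Fintype κ] [DecidableEq κ]
    (w : κ → stdSimplex ℝ ι) (k : κ) : comb w (stdSimplex.vertex (S := ℝ) k) = w k := by
  ext i
  rw [comb_apply]
  simp [Pi.single_apply]

lemma delta_resx {n m : ℕ} (a : Sx X n) (w : Fin (m + 2) → stdSimplex ℝ (Fin (n + 1)))
    (i : Fin (m + 2)) :
    (TopCat.toSSet.obj X).δ i (resx a w) = resx a (w ∘ i.succAbove) := by
  refine sx_ext fun t => ?_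
  have : ev ((TopCat.toSSet.obj X).δ i (resx a w)) t =
    ev (resx a w) (stdSimplex.map i.succAbove t) := rfl
  rw [this, ev_resx, ev_resx, map_eq_comb, comb_comb]
  congr 2
  funext k
  exact comb_at_vertex w _

/-- The chain map from formal affine simplices in the standard simplex induced by a singular
simplex. -/
noncomputable def push {n : ℕ} (a : Sx X n) (m : ℕ) :
    Tup (stdSimplex ℝ (Fin (n + 1))) (m + 1) →ₗ[ℚ] Ch (TopCat.toSSet.obj X) m :=
  Finsupp.lmapDomain ℚ ℚ (resx a)

lemma push_single {n m : ℕ} (a : Sx X n) (w : Fin (m + 1) → stdSimplex ℝ (Fin (n + 1))) (r : ℚ) :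
    push a m (Finsupp.single w r) = Finsupp.single (resx a w) r := by
  simp [push]

lemma dd_single (K : SSet.{0}) (n : ℕ) (a : K.obj (op ⦋n + 1⦌)) (r : ℚ) :
    dd K n (Finsupp.single a r) =
      ∑ i : Fin (n + 2), (-1 : ℚ) ^ (i : ℕ) • Finsupp.single (K.δ i a) r := by
  simp [dd, LinearMap.sum_apply]

lemma dd_push {n m : ℕ} (a : Sx X n) (c : Tup (stdSimplex ℝ (Fin (n + 1))) (m + 2)) :
    dd _ m (push a (m + 1) c) = push a m (bd (m + 1) c) := by
  refine lin_ext (f := dd _ m ∘ₗ push a (m + 1)) (g := push a m ∘ₗ bd (m + 1)) (fun w => ?_) c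
  simp only [LinearMap.comp_apply, push_single, dd_single, bd_single, map_sum, map_smul]
  refine Finset.sum_congr rfl fun i _ => ?_
  rw [delta_resx]

lemma push_resx {n m l : ℕ} (a : Sx X n) (w : Fin (m + 1) → stdSimplex ℝ (Fin (n + 1)))
    (c : Tup (stdSimplex ℝ (Fin (m + 1))) (l + 1)) :
    push (resx a w) l c = push a l (mapT (comb w) (l + 1) c) := by
  refine lin_ext (f := push (resx a w) l) (g := push a l ∘ₗ mapT (comb w) (l + 1)) (fun u => ?_) c
  simp only [LinearMap.comp_apply, push_single, mapT_single, resx_resx]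

/-- The standard simplex as a formal simplex. -/
noncomputable def std (n : ℕ) : Tup (stdSimplex ℝ (Fin (n + 1))) (n + 1) :=
  Finsupp.single (fun k => stdSimplex.vertex (S := ℝ) k) 1

lemma mapT_std {n m : ℕ} (w : Fin (m + 1) → stdSimplex ℝ (Fin (n + 1))) :
    mapT (comb w) (m + 1) (std m) = Finsupp.single w 1 := by
  rw [std, mapT_single]
  congr 1
  funext k
  exact comb_at_vertex w k

lemma push_std {n : ℕ} (a : Sx X n) : push a n (std n) = Finsupp.single a 1 := by
  rw [std, push_single, resx_vertex]

/-- Barycentric subdivision of singular chains. -/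
noncomputable def sdS (n : ℕ) : Ch (TopCat.toSSet.obj X) n →ₗ[ℚ] Ch (TopCat.toSSet.obj X) n :=
  Finsupp.linearCombination ℚ fun a => push a n (sd bary (n + 1) (std n))

/-- The homotopy between the identity and barycentric subdivision of singular chains. -/
noncomputable def hS (n : ℕ) :
    Ch (TopCat.toSSet.obj X) n →ₗ[ℚ] Ch (TopCat.toSSet.obj X) (n + 1) :=
  Finsupp.linearCombination ℚ fun a => push a (n + 1) (hT bary (n + 1) (std n))

lemma sdS_single {n : ℕ} (a : Sx X n) :
    sdS n (Finsupp.single a 1) = push a n (sd bary (n + 1) (std n)) := by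
  simp [sdS]

lemma hS_single {n : ℕ} (a : Sx X n) :
    hS n (Finsupp.single a 1) = push a (n + 1) (hT bary (n + 1) (std n)) := by
  simp [hS]

/-- Subdivision on the model simplices determines subdivision of singular chains, because affine
maps preserve barycenters. -/
lemma sdS_push {n m : ℕ} (a : Sx X n) (c : Tup (stdSimplex ℝ (Fin (n + 1))) (m + 1)) :
    sdS m (push a m c) = push a m (sd bary (m + 1) c) := by
  refine lin_ext (f := sdS m ∘ₗ push a m) (g := push a m ∘ₗ sd bary (m + 1)) (fun w => ?_) c
  simp only [LinearMap.comp_apply, push_single, sdS_single]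
  rw [push_resx, mapT_sd (b' := bary) _ (fun m v => comb_bary w m v), mapT_std]

lemma hS_push {n m : ℕ} (a : Sx X n) (c : Tup (stdSimplex ℝ (Fin (n + 1))) (m + 1)) :
    hS m (push a m c) = push a (m + 1) (hT bary (m + 1) c) := by
  refine lin_ext (f := hS m ∘ₗ push a m) (g := push a (m + 1) ∘ₗ hT bary (m + 1)) (fun w => ?_) c
  simp only [LinearMap.comp_apply, push_single, hS_single]
  rw [push_resx, mapT_hT (b' := bary) _ (fun m v => comb_bary w m v), mapT_std]

lemma dd_sdS (n : ℕ) (c : Ch (TopCat.toSSet.obj X) (n + 1)) :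
    dd _ n (sdS (n + 1) c) = sdS n (dd _ n c) := by
  refine lin_ext (f := dd _ n ∘ₗ sdS (n + 1)) (g := sdS n ∘ₗ dd _ n) (fun a => ?_) c
  simp only [LinearMap.comp_apply]
  rw [sdS_single, dd_push, bd_sd, ← push_std, dd_push, sdS_push]

lemma dd_hS (n : ℕ) (c : Ch (TopCat.toSSet.obj X) (n + 1)) :
    dd _ (n + 1) (hS (n + 1) c) + hS n (dd _ n c) = c - sdS (n + 1) c := by
  refine lin_ext (f := dd _ (n + 1) ∘ₗ hS (n + 1) + hS n ∘ₗ dd _ n)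
    (g := LinearMap.id - sdS (n + 1)) (fun a => ?_) c
  simp only [LinearMap.comp_apply, LinearMap.add_apply, LinearMap.sub_apply, LinearMap.id_apply]
  rw [hS_single, dd_push, sdS_single, ← push_std a, dd_push, hS_push, ← map_add, bd_hT, map_sub]

lemma dd_hS_zero (c : Ch (TopCat.toSSet.obj X) 0) : dd _ 0 (hS 0 c) = c - sdS 0 c := by
  refine lin_ext (f := dd _ 0 ∘ₗ hS 0) (g := LinearMap.id - sdS 0) (fun a => ?_) c
  simp only [LinearMap.comp_apply, LinearMap.sub_apply, LinearMap.id_apply]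
  rw [hS_single, dd_push, sdS_single, ← push_std a, ← map_sub, ← bd_hT]
  simp [hT]

/-- The simplices contained in `U` or in `V`. -/
def small (X : TopCat.{0}) (U V : Set X) : (TopCat.toSSet.obj X).Subcomplex where
  obj n := {a | (∀ t, X.toSSetObjEquiv n a t ∈ U) ∨ (∀ t, X.toSSetObjEquiv n a t ∈ V)}
  map {n m} f a ha := by
    have h (t : stdSimplex ℝ (Fin (m.unop.len + 1))) :
      X.toSSetObjEquiv m ((TopCat.toSSet.obj X).map f a) t =
        X.toSSetObjEquiv n a (stdSimplex.map f.unop t) := rfl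
    rcases ha with ha | ha
    · exact Or.inl fun t => by rw [h]; exact ha _
    · exact Or.inr fun t => by rw [h]; exact ha _

variable {U V : Set X}

lemma mem_small {n : ℕ} (a : Sx X n) :
    a ∈ (small X U V).obj (op ⦋n⦌) ↔ (∀ t, ev a t ∈ U) ∨ (∀ t, ev a t ∈ V) := Iff.rfl

/-- Small chains. -/
abbrev smallCh (X : TopCat.{0}) (U V : Set X) (n : ℕ) : Submodule ℚ (Ch (TopCat.toSSet.obj X) n) :=
  Finsupp.supported ℚ ℚ ((small X U V).obj (op ⦋n⦌))

lemma resx_small {n m : ℕ} {a : Sx X n} (ha : a ∈ (small X U V).obj (op ⦋n⦌))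
    (w : Fin (m + 1) → stdSimplex ℝ (Fin (n + 1))) : resx a w ∈ (small X U V).obj (op ⦋m⦌) := by
  rw [mem_small] at ha ⊢
  simp only [ev_resx]
  exact ha.imp (fun h t => h _) (fun h t => h _)

lemma push_small {n m : ℕ} {a : Sx X n} (ha : a ∈ (small X U V).obj (op ⦋n⦌))
    (c : Tup (stdSimplex ℝ (Fin (n + 1))) (m + 1)) : push a m c ∈ smallCh X U V m := by
  refine lin_supported (f := push a m) (A := Set.univ) (fun w _ => ?_)
    (by rw [Finsupp.supported_univ]; trivial)
  rw [push_single]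
  exact Finsupp.single_mem_supported ℚ _ (resx_small ha w)

lemma sdS_small {n : ℕ} {c : Ch (TopCat.toSSet.obj X) n} (hc : c ∈ smallCh X U V n) :
    sdS n c ∈ smallCh X U V n :=
  lin_supported (fun a ha => by rw [sdS_single]; exact push_small ha _) hc

lemma hS_small {n : ℕ} {c : Ch (TopCat.toSSet.obj X) n} (hc : c ∈ smallCh X U V n) :
    hS n c ∈ smallCh X U V (n + 1) :=
  lin_supported (fun a ha => by rw [hS_single]; exact push_small ha _) hc

lemma sdS_pow_push {n m : ℕ} (a : Sx X n) (j : ℕ)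
    (c : Tup (stdSimplex ℝ (Fin (n + 1))) (m + 1)) :
    (sdS m ^ j) (push a m c) = push a m ((sd bary (m + 1) ^ j) c) := by
  induction j with
  | zero => simp
  | succ j ih => simp only [pow_succ', Module.End.mul_apply, ih, sdS_push]

lemma sdS_pow_small {n : ℕ} {c : Ch (TopCat.toSSet.obj X) n} (hc : c ∈ smallCh X U V n) (j : ℕ) :
    (sdS n ^ j) c ∈ smallCh X U V n := by
  induction j with
  | zero => simpa
  | succ j ih => rw [pow_succ', Module.End.mul_apply]; exact sdS_small ih

lemma exists_sdS_small (hU : IsOpen U) (hV : IsOpen V) (hUV : U ∪ V = Set.univ) {n : ℕ}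
    (c : Ch (TopCat.toSSet.obj X) n) : ∃ j, (sdS n ^ j) c ∈ smallCh X U V n := by
  induction c using Finsupp.induction_linear with
  | zero => exact ⟨0, by simp⟩
  | add f g hf hg =>
    obtain ⟨i, hi⟩ := hf
    obtain ⟨j, hj⟩ := hg
    refine ⟨i + j, ?_⟩
    rw [map_add]
    refine Submodule.add_mem _ ?_ ?_
    · rw [add_comm, pow_add, Module.End.mul_apply]; exact sdS_pow_small hi j
    · rw [pow_add, Module.End.mul_apply]; exact sdS_pow_small hj i
  | single a r =>
    obtain ⟨j, hj⟩ := exists_sd_subordinate n (ev a ⁻¹' U) (ev a ⁻¹' V)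
      (hU.preimage (ev a).continuous) (hV.preimage (ev a).continuous)
      (by rw [← Set.preimage_union, hUV, Set.preimage_univ])
    refine ⟨j, ?_⟩
    have h1 : Finsupp.single a r = r • Finsupp.single a (1 : ℚ) := by simp
    rw [h1, map_smul, ← push_std, sdS_pow_push]
    refine Submodule.smul_mem _ _ (lin_supported (f := push a n) (fun w hw => ?_) hj)
    rw [push_single]
    refine Finsupp.single_mem_supported ℚ _ ((mem_small _).2 ?_)
    simp only [ev_resx]
    exact hw

/-- Chains that become small after subdivision, and whose boundary is small, are small up to
boundaries. -/
lemma relative_small {n : ℕ} (j : ℕ) (x : Ch (TopCat.toSSet.obj X) n)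
    (hx : ∀ m (h : n = m + 1), dd _ m (h ▸ x) ∈ smallCh X U V m)
    (hj : (sdS n ^ j) x ∈ smallCh X U V n) :
    ∃ y, x - dd _ n y ∈ smallCh X U V n := by
  induction j generalizing x with
  | zero => exact ⟨0, by simpa using hj⟩
  | succ j ih =>
    obtain ⟨y, hy⟩ := ih (sdS n x) (fun m h => by
        subst h
        rw [dd_sdS]
        exact sdS_small (hx m rfl)) (by rwa [pow_succ] at hj)
    refine ⟨y + hS n x, ?_⟩
    cases n with
    | zero =>
      rw [map_add, dd_hS_zero]
      convert hy using 1
      abel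
    | succ n =>
      have h1 := hS_small (hx n rfl)
      have h2 := dd_hS n x
      have h3 : x - dd _ (n + 1) (y + hS (n + 1) x) =
          (sdS (n + 1) x - dd _ (n + 1) y) + hS n (dd _ n x) := by
        rw [map_add, eq_sub_of_add_eq h2]
        abel
      rw [h3]
      exact Submodule.add_mem _ hy h1

lemma mem_range_small {n : ℕ} (x : Ch (TopCat.toSSet.obj X) n) :
    x ∈ LinearMap.range ((FC.map (small X U V).ι).f n).hom ↔ x ∈ smallCh X U V n := by
  have h := Finsupp.lmapDomain_supported (M := ℚ) (R := ℚ)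
    (fun a : ((small X U V).obj (op ⦋n⦌)) => (a : Sx X n)) Set.univ
  rw [Finsupp.supported_univ, Submodule.map_top, Set.image_univ, Subtype.range_coe] at h
  rw [smallCh, ← h]
  rfl

/-- Singular homology can be computed with simplices subordinate to an open cover. -/
lemma QI_small (hU : IsOpen U) (hV : IsOpen V) (hUV : U ∪ V = Set.univ) :
    QI (small X U V).ι := by
  refine quasiIso_of_relative _ (fun n => ?_) fun n x hx => ?_
  · exact Finsupp.mapDomain_injective Subtype.val_injective
  · obtain ⟨j, hj⟩ := exists_sdS_small hU hV hUV (n := n) x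
    obtain ⟨y, hy⟩ := relative_small j x (fun m h => by
      subst h
      exact (congrArg (· ∈ smallCh X U V m) (FC_d_apply _ m x)).mp ((mem_range_small _).1 (hx m))) hj
    exact ⟨y, (mem_range_small _).2 ((congrArg (fun z : Ch (TopCat.toSSet.obj X) n =>
      @HSub.hSub (Ch (TopCat.toSSet.obj X) n) _ _ _ x z ∈ smallCh X U V n) (FC_d_apply _ n y)).mpr hy)⟩

end

/-! ### The Mayer–Vietoris sequence -/

/-- A commutative square of simplicial sets exhibiting `K` as the union of `A` and `B`, with
intersection `C`. -/
structure BiSq {C A B K : SSet.{0}} (α : C ⟶ A) (β : C ⟶ B) (γ : A ⟶ K) (δ : B ⟶ K) : Prop where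
  comm : α ≫ γ = β ≫ δ
  injα : ∀ n, Function.Injective (α.app (op ⦋n⦌))
  injγ : ∀ n, Function.Injective (γ.app (op ⦋n⦌))
  injδ : ∀ n, Function.Injective (δ.app (op ⦋n⦌))
  surj : ∀ n (k : K.obj (op ⦋n⦌)), (∃ a, γ.app _ a = k) ∨ ∃ b, δ.app _ b = k
  pull : ∀ n (a : A.obj (op ⦋n⦌)) (b : B.obj (op ⦋n⦌)), γ.app _ a = δ.app _ b →
    ∃ c, α.app _ c = a ∧ β.app _ c = b

section
variable {C A B K : Type} {α : C → A} {β : C → B} {γ : A → K} {δ : B → K}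

lemma chain_pull (comm : ∀ c, γ (α c) = δ (β c)) (injγ : Function.Injective γ)
    (injδ : Function.Injective δ) (pull : ∀ a b, γ a = δ b → ∃ c, α c = a ∧ β c = b)
    (a : A →₀ ℚ) (b : B →₀ ℚ) (h : Finsupp.mapDomain γ a = Finsupp.mapDomain δ b) :
    ∃ c, Finsupp.mapDomain α c = a ∧ Finsupp.mapDomain β c = b := by
  have hmem : Finsupp.mapDomain γ a ∈ Finsupp.supported ℚ ℚ (Set.range (γ ∘ α)) := by
    classical
    rw [Finsupp.mem_supported]
    intro k hk
    have h1 := Finsupp.mapDomain_support hk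
    rw [h] at hk
    have h2 := Finsupp.mapDomain_support hk
    simp only [Finset.mem_image] at h1 h2
    obtain ⟨x, -, rfl⟩ := h1
    obtain ⟨y, -, hy⟩ := h2
    obtain ⟨c, rfl, -⟩ := pull x y hy.symm
    exact ⟨c, rfl⟩
  have hr := Finsupp.lmapDomain_supported (M := ℚ) (R := ℚ) (γ ∘ α) Set.univ
  rw [Finsupp.supported_univ, Submodule.map_top, Set.image_univ] at hr
  rw [← hr] at hmem
  obtain ⟨c, hc⟩ := hmem
  rw [Finsupp.lmapDomain_apply] at hc
  refine ⟨c, ?_, ?_⟩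
  · apply Finsupp.mapDomain_injective injγ
    rw [← hc, Finsupp.mapDomain_comp]
  · apply Finsupp.mapDomain_injective injδ
    rw [← h, ← hc, ← Finsupp.mapDomain_comp]
    congr 1
    funext c
    exact (comm c).symm

lemma chain_surj (surj : ∀ k, (∃ a, γ a = k) ∨ ∃ b, δ b = k) (x : K →₀ ℚ) :
    ∃ (a : A →₀ ℚ) (b : B →₀ ℚ), Finsupp.mapDomain γ a - Finsupp.mapDomain δ b = x := by
  induction x using Finsupp.induction_linear with
  | zero => exact ⟨0, 0, by simp⟩
  | add f g hf hg =>
    obtain ⟨a, b, rfl⟩ := hf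
    obtain ⟨a', b', rfl⟩ := hg
    exact ⟨a + a', b + b', by rw [Finsupp.mapDomain_add, Finsupp.mapDomain_add]; abel⟩
  | single k r =>
    rcases surj k with ⟨a, rfl⟩ | ⟨b, rfl⟩
    · exact ⟨Finsupp.single a r, 0, by simp⟩
    · exact ⟨0, -Finsupp.single b r, by
        rw [← Finsupp.lmapDomain_apply ℚ ℚ δ, map_neg]; simp⟩
end

section
variable {C A B K : SSet.{0}} {α : C ⟶ A} {β : C ⟶ B} {γ : A ⟶ K} {δ : B ⟶ K}

/-- The short complex of chain complexes underlying the Mayer–Vietoris sequence. -/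
noncomputable abbrev BiSq.sc (h : BiSq α β γ δ) : ShortComplex (ChainComplex (ModuleCat.{0} ℚ) ℕ) :=
  ShortComplex.mk (X₂ := FC.obj A ⊞ FC.obj B) (biprod.lift (FC.map α) (FC.map β))
    (biprod.desc (FC.map γ) (-FC.map δ)) (by
      rw [biprod.lift_desc, ← Functor.map_comp, Preadditive.comp_neg, ← Functor.map_comp, h.comm,
        add_neg_cancel])

lemma BiSq.shortExact (h : BiSq α β γ δ) : h.sc.ShortExact := by
  apply HomologicalComplex.shortExact_of_degreewise_shortExact
  intro n
  have hf : h.sc.f ≫ biprod.fst = FC.map α := biprod.lift_fst _ _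
  have hg : (biprod.inl : FC.obj A ⟶ FC.obj A ⊞ FC.obj B) ≫ h.sc.g = FC.map γ := biprod.inl_desc _ _
  have hg' : (biprod.inr : FC.obj B ⟶ FC.obj A ⊞ FC.obj B) ≫ h.sc.g = -FC.map δ :=
    biprod.inr_desc _ _
  have hff : h.sc.f = FC.map α ≫ biprod.inl + FC.map β ≫ biprod.inr := by
    apply biprod.hom_ext <;> simp [BiSq.sc]
  have hγ (a : Ch A n) : (h.sc.g.f n).hom
      (((biprod.inl : FC.obj A ⟶ FC.obj A ⊞ FC.obj B).f n).hom a) =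
      Finsupp.mapDomain (γ.app (op ⦋n⦌)) a :=
    congrArg (fun φ : FC.obj A ⟶ FC.obj K => (φ.f n).hom a) hg
  have hδ (b : Ch B n) : (h.sc.g.f n).hom
      (((biprod.inr : FC.obj B ⟶ FC.obj A ⊞ FC.obj B).f n).hom b) =
      -Finsupp.mapDomain (δ.app (op ⦋n⦌)) b :=
    congrArg (fun φ : FC.obj B ⟶ FC.obj K => (φ.f n).hom b) hg'
  refine { exact := ?_, mono_f := ?_, epi_g := ?_ }
  · rw [ShortComplex.moduleCat_exact_iff]
    intro x hx
    change (FC.obj A ⊞ FC.obj B).X n at x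
    change (h.sc.g.f n).hom x = 0 at hx
    set a := ((biprod.fst : FC.obj A ⊞ FC.obj B ⟶ FC.obj A).f n).hom x with ha
    set b := ((biprod.snd : FC.obj A ⊞ FC.obj B ⟶ FC.obj B).f n).hom x with hb
    have hxx : x = ((biprod.inl : FC.obj A ⟶ FC.obj A ⊞ FC.obj B).f n).hom a +
        ((biprod.inr : FC.obj B ⟶ FC.obj A ⊞ FC.obj B).f n).hom b :=
      (congrArg (fun φ : FC.obj A ⊞ FC.obj B ⟶ FC.obj A ⊞ FC.obj B => (φ.f n).hom x)
        (biprod.total (X := FC.obj A) (Y := FC.obj B))).symm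
    have h0 : Finsupp.mapDomain (γ.app (op ⦋n⦌)) a - Finsupp.mapDomain (δ.app (op ⦋n⦌)) b = 0 := by
      rw [hxx] at hx
      rw [sub_eq_add_neg]
      exact (congrArg₂ (· + ·) (hγ a) (hδ b)).symm.trans
        ((map_add (h.sc.g.f n).hom _ _).symm.trans hx)
    obtain ⟨c, hc, hc'⟩ := chain_pull (α := α.app (op ⦋n⦌)) (β := β.app (op ⦋n⦌))
      (fun c => congrArg (fun φ : C ⟶ K => φ.app (op ⦋n⦌) c) h.comm) (h.injγ n) (h.injδ n)
      (h.pull n) a b (sub_eq_zero.1 h0)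
    refine ⟨c, ?_⟩
    have e := congrArg (fun φ : FC.obj C ⟶ FC.obj A ⊞ FC.obj B => (φ.f n).hom c) hff
    refine e.trans ?_
    rw [hxx, ← hc, ← hc']
    rfl
  · have : Mono ((FC.map α).f n) :=
      (ModuleCat.mono_iff_injective _).2 (Finsupp.mapDomain_injective (h.injα n))
    have e : (FC.map α).f n = h.sc.f.f n ≫ (biprod.fst : FC.obj A ⊞ FC.obj B ⟶ _).f n := by
      rw [← hf]; rfl
    rw [e] at this
    exact mono_of_mono (h.sc.f.f n) ((biprod.fst : FC.obj A ⊞ FC.obj B ⟶ _).f n)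
  · refine (ModuleCat.epi_iff_surjective _).2 fun x => ?_
    obtain ⟨a, b, hab⟩ := chain_surj (h.surj n) x
    refine ⟨((biprod.inl : FC.obj A ⟶ FC.obj A ⊞ FC.obj B).f n).hom a +
      ((biprod.inr : FC.obj B ⟶ FC.obj A ⊞ FC.obj B).f n).hom b, ?_⟩
    refine (map_add (h.sc.g.f n).hom _ _).trans ?_
    rw [← hab, sub_eq_add_neg]
    exact congrArg₂ (· + ·) (hγ a) (hδ b)

/-- The homology of the middle term of the Mayer–Vietoris short complex. -/
noncomputable abbrev mid (A B : SSet.{0}) (n : ℕ) : ModuleCat.{0} ℚ :=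
  (FC.obj A ⊞ FC.obj B).homology n

/-- The pair of classes on `A` and `B`, as a class in the middle term. -/
noncomputable def pr {A B : SSet.{0}} {n : ℕ} (a : HH A n) (b : HH B n) : mid A B n :=
  (HomologicalComplex.homologyMap (biprod.inl : FC.obj A ⟶ FC.obj A ⊞ FC.obj B) n).hom a +
  (HomologicalComplex.homologyMap (biprod.inr : FC.obj B ⟶ FC.obj A ⊞ FC.obj B) n).hom b

lemma hmap_comp {C D E : ChainComplex (ModuleCat.{0} ℚ) ℕ} (f : C ⟶ D) (g : D ⟶ E) (n : ℕ)
    (x : C.homology n) : (HomologicalComplex.homologyMap g n).hom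
      ((HomologicalComplex.homologyMap f n).hom x) =
      (HomologicalComplex.homologyMap (f ≫ g) n).hom x := by
  rw [HomologicalComplex.homologyMap_comp]; rfl

lemma hmap_add {C D : ChainComplex (ModuleCat.{0} ℚ) ℕ} (f g : C ⟶ D) (n : ℕ)
    (x : C.homology n) : (HomologicalComplex.homologyMap (f + g) n).hom x =
      (HomologicalComplex.homologyMap f n).hom x + (HomologicalComplex.homologyMap g n).hom x := by
  rw [HomologicalComplex.homologyMap_add]; rfl

lemma hmap_neg {C D : ChainComplex (ModuleCat.{0} ℚ) ℕ} (f : C ⟶ D) (n : ℕ)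
    (x : C.homology n) : (HomologicalComplex.homologyMap (-f) n).hom x =
      -(HomologicalComplex.homologyMap f n).hom x := by
  rw [HomologicalComplex.homologyMap_neg]; rfl

lemma exists_pr {A B : SSet.{0}} {n : ℕ} (x : mid A B n) :
    ∃ (a : HH A n) (b : HH B n), x = pr a b := by
  refine ⟨(HomologicalComplex.homologyMap (biprod.fst : FC.obj A ⊞ FC.obj B ⟶ _) n).hom x,
    (HomologicalComplex.homologyMap (biprod.snd : FC.obj A ⊞ FC.obj B ⟶ _) n).hom x, ?_⟩
  rw [pr, hmap_comp, hmap_comp, ← hmap_add, biprod.total, HomologicalComplex.homologyMap_id]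
  rfl

lemma pr_inj {A B : SSet.{0}} {n : ℕ} {a a' : HH A n} {b b' : HH B n} (h : pr a b = pr a' b') :
    a = a' ∧ b = b' := by
  have h1 (a : HH A n) (b : HH B n) : (HomologicalComplex.homologyMap
      (biprod.fst : FC.obj A ⊞ FC.obj B ⟶ _) n).hom (pr a b) = a := by
    rw [pr, map_add, hmap_comp, hmap_comp, biprod.inl_fst, biprod.inr_fst]
    simp
  have h2 (a : HH A n) (b : HH B n) : (HomologicalComplex.homologyMap
      (biprod.snd : FC.obj A ⊞ FC.obj B ⟶ _) n).hom (pr a b) = b := by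
    rw [pr, map_add, hmap_comp, hmap_comp, biprod.inl_snd, biprod.inr_snd]
    simp
  exact ⟨by rw [← h1 a b, h, h1], by rw [← h2 a b, h, h2]⟩

lemma BiSq.f_eq (h : BiSq α β γ δ) (n : ℕ) (c : HH C n) :
    (HomologicalComplex.homologyMap h.sc.f n).hom c = pr (Hm α n c) (Hm β n c) := by
  have hff : h.sc.f = FC.map α ≫ biprod.inl + FC.map β ≫ biprod.inr := by
    apply biprod.hom_ext <;> simp [BiSq.sc]
  rw [pr, Hm, Hm, hmap_comp, hmap_comp, ← hmap_add]
  exact congrArg (fun φ : FC.obj C ⟶ FC.obj A ⊞ FC.obj B =>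
    (HomologicalComplex.homologyMap φ n).hom c) hff

lemma BiSq.g_eq (h : BiSq α β γ δ) (n : ℕ) (a : HH A n) (b : HH B n) :
    (HomologicalComplex.homologyMap h.sc.g n).hom (pr a b) = Hm γ n a - Hm δ n b := by
  refine (map_add (HomologicalComplex.homologyMap h.sc.g n).hom _ _).trans ?_
  have h1 := hmap_comp (biprod.inl : FC.obj A ⟶ FC.obj A ⊞ FC.obj B) h.sc.g n a
  have h2 := hmap_comp (biprod.inr : FC.obj B ⟶ FC.obj A ⊞ FC.obj B) h.sc.g n b
  have hg : (biprod.inl : FC.obj A ⟶ FC.obj A ⊞ FC.obj B) ≫ h.sc.g = FC.map γ := biprod.inl_desc _ _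
  have hg' : (biprod.inr : FC.obj B ⟶ FC.obj A ⊞ FC.obj B) ≫ h.sc.g = -FC.map δ :=
    biprod.inr_desc _ _
  rw [hg] at h1
  rw [hg', hmap_neg] at h2
  rw [sub_eq_add_neg]
  exact congrArg₂ (· + ·) h1 h2

/-- The connecting homomorphism of the Mayer–Vietoris sequence. -/
noncomputable def BiSq.bdry (h : BiSq α β γ δ) (n : ℕ) : HH K (n + 1) →ₗ[ℚ] HH C n :=
  (h.shortExact.δ (n + 1) n (by simp)).hom

/-- Exactness at `H_n(A) ⊕ H_n(B)`. -/
lemma BiSq.mid_exact (h : BiSq α β γ δ) {n : ℕ} {a : HH A n} {b : HH B n}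
    (hab : Hm γ n a = Hm δ n b) : ∃ c, Hm α n c = a ∧ Hm β n c = b := by
  obtain ⟨c, hc⟩ := (ShortComplex.moduleCat_exact_iff _).1 (h.shortExact.homology_exact₂ n)
    (pr a b) ((h.g_eq n a b).trans (by rw [hab, sub_self]))
  exact ⟨c, pr_inj ((h.f_eq n c).symm.trans hc)⟩

/-- Exactness at `H_{n+1}(K)`. -/
lemma BiSq.of_bdry_eq_zero (h : BiSq α β γ δ) {n : ℕ} {z : HH K (n + 1)} (hz : h.bdry n z = 0) :
    ∃ a b, z = Hm γ (n + 1) a + Hm δ (n + 1) b := by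
  obtain ⟨x, hx⟩ := (ShortComplex.moduleCat_exact_iff _).1
    (h.shortExact.homology_exact₃ (n + 1) n (by simp)) z hz
  obtain ⟨a, b, rfl⟩ := exists_pr x
  refine ⟨a, -b, ?_⟩
  rw [map_neg, ← sub_eq_add_neg]
  exact hx.symm.trans (h.g_eq _ a b)

lemma BiSq.bdry_γ (h : BiSq α β γ δ) {n : ℕ} (a : HH A (n + 1)) :
    h.bdry n (Hm γ (n + 1) a) = 0 := by
  have h1 := h.g_eq (n + 1) a 0
  rw [map_zero, sub_zero] at h1
  rw [← h1]
  exact LinearMap.congr_fun (congrArg ModuleCat.Hom.hom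
    (h.shortExact.comp_δ (n + 1) n (by simp))) (pr a 0)

lemma BiSq.bdry_δ (h : BiSq α β γ δ) {n : ℕ} (b : HH B (n + 1)) :
    h.bdry n (Hm δ (n + 1) b) = 0 := by
  have h1 := h.g_eq (n + 1) 0 (-b)
  rw [map_zero, map_neg, sub_neg_eq_add, zero_add] at h1
  rw [← h1]
  exact LinearMap.congr_fun (congrArg ModuleCat.Hom.hom
    (h.shortExact.comp_δ (n + 1) n (by simp))) (pr 0 (-b))

lemma pr_zero {A B : SSet.{0}} {n : ℕ} : pr (0 : HH A n) (0 : HH B n) = 0 := by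
  rw [pr, map_zero, map_zero, add_zero]

lemma BiSq.α_bdry (h : BiSq α β γ δ) {n : ℕ} (z : HH K (n + 1)) :
    Hm α n (h.bdry n z) = 0 ∧ Hm β n (h.bdry n z) = 0 := by
  have h1 : (HomologicalComplex.homologyMap h.sc.f n).hom (h.bdry n z) = 0 :=
    LinearMap.congr_fun (congrArg ModuleCat.Hom.hom (h.shortExact.δ_comp (n + 1) n (by simp))) z
  refine pr_inj ?_
  rw [pr_zero, ← h.f_eq]
  exact h1

/-- Exactness at `H_n(C)`. -/
lemma BiSq.exists_bdry (h : BiSq α β γ δ) {n : ℕ} {c : HH C n} (h1 : Hm α n c = 0)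
    (h2 : Hm β n c = 0) : ∃ z, h.bdry n z = c := by
  obtain ⟨z, hz⟩ := (ShortComplex.moduleCat_exact_iff _).1
    (h.shortExact.homology_exact₁ (n + 1) n (by simp)) c
    ((h.f_eq n c).trans (by rw [h1, h2, pr_zero]))
  exact ⟨z, hz⟩

/-- The sequence ends with a surjection onto `H_0(K)`: in degree zero, homology is the quotient of
the chains by the boundaries, so it preserves epimorphisms. -/
lemma BiSq.exists_zero (h : BiSq α β γ δ) (z : HH K 0) : ∃ a b, z = Hm γ 0 a + Hm δ 0 b := by
  have hepi : Epi h.sc.g := h.shortExact.epi_g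
  have hiso (K : ChainComplex (ModuleCat.{0} ℚ) ℕ) : IsIso (K.homologyι 0) :=
    ShortComplex.isIso_homologyι (K.sc 0) (K.shape _ _ (by simp))
  have e := HomologicalComplex.homologyι_naturality h.sc.g 0
  have h1 : Epi (HomologicalComplex.homologyMap h.sc.g 0 ≫ h.sc.X₃.homologyι 0) := by
    rw [e]
    have := hiso h.sc.X₂
    infer_instance
  have := hiso h.sc.X₃
  have h2 : HomologicalComplex.homologyMap h.sc.g 0 =
      (HomologicalComplex.homologyMap h.sc.g 0 ≫ h.sc.X₃.homologyι 0) ≫ inv (h.sc.X₃.homologyι 0) := by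
    rw [Category.assoc, IsIso.hom_inv_id, Category.comp_id]
  have h3 : Epi (HomologicalComplex.homologyMap h.sc.g 0) := by
    rw [h2]; exact epi_comp _ _
  obtain ⟨x, hx⟩ := (ModuleCat.epi_iff_surjective _).1 h3 z
  obtain ⟨a, b, rfl⟩ := exists_pr (A := A) (B := B) x
  refine ⟨a, -b, ?_⟩
  rw [map_neg, ← sub_eq_add_neg]
  exact hx.symm.trans (h.g_eq _ a b)

/-- Naturality of the connecting homomorphism. -/
lemma BiSq.bdry_nat (h : BiSq α β γ δ) {C' A' B' K' : SSet.{0}} {α' : C' ⟶ A'} {β' : C' ⟶ B'}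
    {γ' : A' ⟶ K'} {δ' : B' ⟶ K'} (h' : BiSq α' β' γ' δ') (c : C ⟶ C') (a : A ⟶ A') (b : B ⟶ B')
    (k : K ⟶ K') (hα : α ≫ a = c ≫ α') (hβ : β ≫ b = c ≫ β') (hγ : γ ≫ k = a ≫ γ')
    (hδ : δ ≫ k = b ≫ δ') {n : ℕ} (z : HH K (n + 1)) :
    h'.bdry n (Hm k (n + 1) z) = Hm c n (h.bdry n z) := by
  let φ : h.sc ⟶ h'.sc :=
    { τ₁ := FC.map c
      τ₂ := biprod.map (FC.map a) (FC.map b)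
      τ₃ := FC.map k
      comm₁₂ := by
        dsimp only [BiSq.sc]
        apply biprod.hom_ext <;> simp [← Functor.map_comp, hα, hβ]
      comm₂₃ := by
        dsimp only [BiSq.sc]
        apply biprod.hom_ext' <;> simp [← Functor.map_comp, hγ, hδ] }
  have := HomologicalComplex.HomologySequence.δ_naturality φ h.shortExact h'.shortExact
    (n + 1) n (by simp)
  exact (LinearMap.congr_fun (congrArg ModuleCat.Hom.hom this) z).symm

end

/-! ### Homology of spaces -/

/-- Singular homology of a space. -/
noncomputable abbrev H (X : Type) [TopologicalSpace X] (n : ℕ) : ModuleCat.{0} ℚ :=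
  HH (TopCat.toSSet.obj (TopCat.of X)) n

section
variable {X Y Z : Type} [TopologicalSpace X] [TopologicalSpace Y] [TopologicalSpace Z]

/-- The map of singular simplicial sets induced by a continuous map. -/
noncomputable abbrev sg (f : C(X, Y)) :
    TopCat.toSSet.obj (TopCat.of X) ⟶ TopCat.toSSet.obj (TopCat.of Y) :=
  TopCat.toSSet.map (TopCat.ofHom f)

/-- The map induced on singular homology. -/
noncomputable def hm (f : C(X, Y)) (n : ℕ) : H X n →ₗ[ℚ] H Y n := Hm (sg f) n

lemma sg_comp (g : C(Y, Z)) (f : C(X, Y)) : sg f ≫ sg g = sg (g.comp f) := by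
  rw [sg, sg, ← Functor.map_comp]; rfl

lemma hm_hm (g : C(Y, Z)) (f : C(X, Y)) (n : ℕ) (x : H X n) :
    hm g n (hm f n x) = hm (g.comp f) n x := by
  rw [hm, hm, hm, ← sg_comp, Hm_comp]

lemma hm_id (n : ℕ) (x : H X n) : hm (ContinuousMap.id X) n x = x := by
  have : sg (ContinuousMap.id X) = 𝟙 _ := TopCat.toSSet.map_id _
  rw [hm, this, Hm_id]

lemma ev_sg (f : C(X, Y)) {n : ℕ} (a : Sx (TopCat.of X) n) (t : stdSimplex ℝ (Fin (n + 1))) :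
    ev ((sg f).app (op ⦋n⦌) a) t = f (ev a t) := rfl

lemma hm_homotopic {f g : C(X, Y)} (h : f.Homotopic g) (n : ℕ) : hm f n = hm g n := by
  obtain ⟨h⟩ := h
  have e := TopCat.Homotopy.toSSet (f := TopCat.ofHom f) (g := TopCat.ofHom g) h
  have e2 := e.toSimplicialObjectHomotopy.whiskerRight (ModuleCat.free ℚ)
  have e3 := SimplicialObject.Homotopy.toChainHomotopy e2
  have e4 := e3.homologyMap_eq n
  exact congrArg ModuleCat.Hom.hom e4

/-- A homotopy equivalence induces isomorphisms on homology. -/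
lemma hm_bijective_of_homotopy (f : C(X, Y)) (g : C(Y, X))
    (hfg : (f.comp g).Homotopic (ContinuousMap.id Y))
    (hgf : (g.comp f).Homotopic (ContinuousMap.id X)) (n : ℕ) : Function.Bijective (hm f n) := by
  refine Function.bijective_iff_has_inverse.2 ⟨hm g n, fun x => ?_, fun y => ?_⟩
  · rw [hm_hm, hm_homotopic hgf, hm_id]
  · rw [hm_hm, hm_homotopic hfg, hm_id]

lemma hm_bijective_of_homeo (f : C(X, Y)) (g : C(Y, X)) (hfg : ∀ y, f (g y) = y)
    (hgf : ∀ x, g (f x) = x) (n : ℕ) : Function.Bijective (hm f n) := by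
  refine hm_bijective_of_homotopy f g ?_ ?_ n
  · rw [show f.comp g = ContinuousMap.id Y from ContinuousMap.ext hfg]
  · rw [show g.comp f = ContinuousMap.id X from ContinuousMap.ext hgf]

/-- The inclusion of a subspace. -/
def vl (U : Set X) : C(U, X) := ⟨Subtype.val, continuous_subtype_val⟩

/-- Restriction of a continuous map to subspaces. -/
def rs (f : C(X, Y)) {U : Set X} {V : Set Y} (h : ∀ x ∈ U, f x ∈ V) : C(U, V) :=
  ⟨fun x => ⟨f x, h x x.2⟩, by fun_prop⟩

/-- The inclusion of a subspace in a larger one. -/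
def ic {U V : Set X} (h : U ⊆ V) : C(U, V) := ⟨fun x => ⟨x, h x.2⟩, by fun_prop⟩

end

section MV
variable {X : Type} [TopologicalSpace X] (U V : Set X)

/-- Singular simplices of `W` as small simplices. -/
noncomputable def toSmall (W : Set X) (hW : W ⊆ U ∨ W ⊆ V) :
    TopCat.toSSet.obj (TopCat.of W) ⟶ (small (TopCat.of X) U V : SSet) :=
  Subfunctor.lift (sg (vl W)) (by
    rintro n _ ⟨a, rfl⟩
    exact hW.imp (fun h t => h (Subtype.prop _)) (fun h t => h (Subtype.prop _)))

lemma toSmall_ι (W : Set X) (hW : W ⊆ U ∨ W ⊆ V) :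
    toSmall U V W hW ≫ (small (TopCat.of X) U V).ι = sg (vl W) := rfl

lemma ev_toSmall (W : Set X) (hW : W ⊆ U ∨ W ⊆ V) {n : ℕ} (a : Sx (TopCat.of W) n)
    (t : stdSimplex ℝ (Fin (n + 1))) :
    ev ((toSmall U V W hW).app (op ⦋n⦌) a).1 t = (ev a t).1 := rfl

/-- The simplices in `U ∩ V`, in `U`, in `V`, and in `U` or `V` form a bicartesian square. -/
lemma biSq : BiSq (sg (ic (Set.inter_subset_left : U ∩ V ⊆ U)))
    (sg (ic (Set.inter_subset_right : U ∩ V ⊆ V)))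
    (toSmall U V U (Or.inl subset_rfl)) (toSmall U V V (Or.inr subset_rfl)) where
  comm := by
    rw [← cancel_mono (small (TopCat.of X) U V).ι]
    simp only [Category.assoc, toSmall_ι, sg_comp]
    rfl
  injα n a b h := by
    refine sx_ext fun t => ?_
    have : ((ev a t).1 : X) = (ev b t).1 :=
      congrArg (fun s : Sx (TopCat.of U) n => (ev s t).1) h
    exact Subtype.ext this
  injγ n a b h := by
    refine sx_ext fun t => Subtype.ext ?_
    exact congrArg (fun s : (small (TopCat.of X) U V : SSet).obj (op ⦋n⦌) => ev s.1 t) h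
  injδ n a b h := by
    refine sx_ext fun t => Subtype.ext ?_
    exact congrArg (fun s : (small (TopCat.of X) U V : SSet).obj (op ⦋n⦌) => ev s.1 t) h
  surj n k := by
    rcases (mem_small k.1).1 k.2 with h | h
    · exact Or.inl ⟨ev.symm ⟨fun t => ⟨ev k.1 t, h t⟩, by fun_prop⟩,
        Subtype.ext (sx_ext fun t => by rw [ev_toSmall, Equiv.apply_symm_apply]; rfl)⟩
    · exact Or.inr ⟨ev.symm ⟨fun t => ⟨ev k.1 t, h t⟩, by fun_prop⟩,
        Subtype.ext (sx_ext fun t => by rw [ev_toSmall, Equiv.apply_symm_apply]; rfl)⟩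
  pull n a b h := by
    have hab (t : stdSimplex ℝ (Fin (n + 1))) : (ev a t).1 = (ev b t).1 :=
      congrArg (fun s : (small (TopCat.of X) U V : SSet).obj (op ⦋n⦌) => ev s.1 t) h
    refine ⟨ev.symm ⟨fun t => ⟨(ev a t).1, (ev a t).2, hab t ▸ (ev b t).2⟩, by fun_prop⟩, ?_, ?_⟩
    · exact sx_ext fun t => by rw [ev_sg, Equiv.apply_symm_apply]; rfl
    · exact sx_ext fun t => by rw [ev_sg, Equiv.apply_symm_apply]; exact Subtype.ext (hab t)

/-- A cover by two open sets. -/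
structure Cov : Prop where
  left : IsOpen U
  right : IsOpen V
  union : U ∪ V = Set.univ

variable {U V}

lemma Cov.bij (h : Cov U V) (n : ℕ) :
    Function.Bijective (Hm (small (TopCat.of X) U V).ι n) :=
  (QI_small (X := TopCat.of X) h.left h.right h.union).bij n

/-- The connecting map of the Mayer–Vietoris sequence of an open cover. -/
noncomputable def Cov.bdry (h : Cov U V) (n : ℕ) : H X (n + 1) →ₗ[ℚ] H ↑(U ∩ V) n :=
  (biSq U V).bdry n ∘ₗ (LinearEquiv.ofBijective _ (h.bij (n + 1))).symm.toLinearMap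

lemma Cov.bdry_ι (h : Cov U V) (n : ℕ) (z : HH (small (TopCat.of X) U V : SSet) (n + 1)) :
    h.bdry n (Hm (small (TopCat.of X) U V).ι (n + 1) z) = (biSq U V).bdry n z := by
  change (biSq U V).bdry n ((LinearEquiv.ofBijective _ (h.bij (n + 1))).symm
    (LinearEquiv.ofBijective _ (h.bij (n + 1)) z)) = _
  rw [LinearEquiv.symm_apply_apply]

lemma hm_vl_eq {W : Set X} (hW : W ⊆ U ∨ W ⊆ V) (n : ℕ) (a : H W n) :
    hm (vl W) n a = Hm (small (TopCat.of X) U V).ι n (Hm (toSmall U V W hW) n a) := by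
  rw [← Hm_comp, toSmall_ι]; rfl

lemma Cov.mid_exact (h : Cov U V) {n : ℕ} {a : H U n} {b : H V n}
    (hab : hm (vl U) n a = hm (vl V) n b) :
    ∃ c, hm (ic (Set.inter_subset_left : U ∩ V ⊆ U)) n c = a ∧
      hm (ic (Set.inter_subset_right : U ∩ V ⊆ V)) n c = b := by
  refine (biSq U V).mid_exact ((h.bij n).1 ?_)
  rwa [← hm_vl_eq, ← hm_vl_eq]

lemma Cov.of_bdry_eq_zero (h : Cov U V) {n : ℕ} {z : H X (n + 1)} (hz : h.bdry n z = 0) :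
    ∃ a b, z = hm (vl U) (n + 1) a + hm (vl V) (n + 1) b := by
  obtain ⟨z, rfl⟩ := (h.bij (n + 1)).2 z
  rw [h.bdry_ι] at hz
  obtain ⟨a, b, rfl⟩ := (biSq U V).of_bdry_eq_zero hz
  exact ⟨a, b, by rw [map_add, ← hm_vl_eq, ← hm_vl_eq]⟩

lemma Cov.bdry_left (h : Cov U V) {n : ℕ} (a : H U (n + 1)) :
    h.bdry n (hm (vl U) (n + 1) a) = 0 := by
  rw [hm_vl_eq (V := V) (Or.inl subset_rfl), h.bdry_ι]
  exact (biSq U V).bdry_γ a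

lemma Cov.bdry_right (h : Cov U V) {n : ℕ} (b : H V (n + 1)) :
    h.bdry n (hm (vl V) (n + 1) b) = 0 := by
  rw [hm_vl_eq (U := U) (Or.inr subset_rfl), h.bdry_ι]
  exact (biSq U V).bdry_δ b

lemma Cov.res_bdry (h : Cov U V) {n : ℕ} (z : H X (n + 1)) :
    hm (ic (Set.inter_subset_left : U ∩ V ⊆ U)) n (h.bdry n z) = 0 ∧
      hm (ic (Set.inter_subset_right : U ∩ V ⊆ V)) n (h.bdry n z) = 0 := by
  obtain ⟨z, rfl⟩ := (h.bij (n + 1)).2 z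
  rw [h.bdry_ι]
  exact (biSq U V).α_bdry z

lemma Cov.exists_bdry (h : Cov U V) {n : ℕ} {c : H ↑(U ∩ V) n}
    (h1 : hm (ic (Set.inter_subset_left : U ∩ V ⊆ U)) n c = 0)
    (h2 : hm (ic (Set.inter_subset_right : U ∩ V ⊆ V)) n c = 0) : ∃ z, h.bdry n z = c := by
  obtain ⟨z, rfl⟩ := (biSq U V).exists_bdry h1 h2
  exact ⟨_, h.bdry_ι n z⟩

lemma Cov.exists_zero (h : Cov U V) (z : H X 0) :
    ∃ a b, z = hm (vl U) 0 a + hm (vl V) 0 b := by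
  obtain ⟨z, rfl⟩ := (h.bij 0).2 z
  obtain ⟨a, b, rfl⟩ := (biSq U V).exists_zero z
  exact ⟨a, b, by rw [map_add, ← hm_vl_eq, ← hm_vl_eq]⟩

/-- Naturality of the connecting map for maps of open covers. -/
lemma Cov.nat (h : Cov U V) {Y : Type} [TopologicalSpace Y] {U' V' : Set Y} (h' : Cov U' V')
    (f : C(X, Y)) (hU : ∀ x ∈ U, f x ∈ U') (hV : ∀ x ∈ V, f x ∈ V') {n : ℕ} (z : H X (n + 1)) :
    h'.bdry n (hm f (n + 1) z) =
      hm (rs f (fun x (hx : x ∈ U ∩ V) => (⟨hU x hx.1, hV x hx.2⟩ : f x ∈ U' ∩ V'))) n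
        (h.bdry n z) := by
  obtain ⟨z, rfl⟩ := (h.bij (n + 1)).2 z
  rw [h.bdry_ι]
  let k : (small (TopCat.of X) U V : SSet) ⟶ (small (TopCat.of Y) U' V' : SSet) :=
    Subfunctor.lift ((small (TopCat.of X) U V).ι ≫ sg f) (by
      rintro n _ ⟨a, rfl⟩
      exact ((mem_small a.1).1 a.2).imp (fun h t => hU _ (h t)) (fun h t => hV _ (h t)))
  have hk : k ≫ (small (TopCat.of Y) U' V').ι = (small (TopCat.of X) U V).ι ≫ sg f := rfl
  have e : hm f (n + 1) (Hm (small (TopCat.of X) U V).ι (n + 1) z) =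
      Hm (small (TopCat.of Y) U' V').ι (n + 1) (Hm k (n + 1) z) := by
    rw [hm, ← Hm_comp, ← Hm_comp, hk]
  rw [e, h'.bdry_ι]
  refine (biSq U V).bdry_nat (biSq U' V') _ (sg (rs f hU)) (sg (rs f hV)) k ?_ ?_ ?_ ?_ z
  · rw [sg_comp, sg_comp]; rfl
  · rw [sg_comp, sg_comp]; rfl
  · rw [← cancel_mono (small (TopCat.of Y) U' V').ι, Category.assoc, Category.assoc, hk,
      toSmall_ι, ← Category.assoc, toSmall_ι, sg_comp, sg_comp]
    rfl
  · rw [← cancel_mono (small (TopCat.of Y) U' V').ι, Category.assoc, Category.assoc, hk,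
      toSmall_ι, ← Category.assoc, toSmall_ι, sg_comp, sg_comp]
    rfl

end MV

section
variable {X : Type} [TopologicalSpace X]

lemma eq_zero_of_isEmpty [IsEmpty X] {n : ℕ} (x : H X n) : x = 0 := by
  have h0 (m : ℕ) : IsEmpty (Sx (TopCat.of X) m) :=
    ⟨fun a => isEmptyElim (ev a ⟨Pi.single 0 1, single_mem_stdSimplex ℝ 0⟩ : X)⟩
  have h1 : 𝟙 (FC.obj (TopCat.toSSet.obj (TopCat.of X))) = 0 := by
    ext m a
    have : Subsingleton (Ch (TopCat.toSSet.obj (TopCat.of X)) m) := by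
      have : IsEmpty ((TopCat.toSSet.obj (TopCat.of X)).obj (op ⦋m⦌)) := h0 m
      exact inferInstanceAs (Subsingleton (_ →₀ ℚ))
    exact Subsingleton.elim (α := Ch (TopCat.toSSet.obj (TopCat.of X)) m) _ _
  have h2 : HomologicalComplex.homologyMap (𝟙 (FC.obj (TopCat.toSSet.obj (TopCat.of X)))) n =
      HomologicalComplex.homologyMap 0 n := by rw [h1]
  rw [HomologicalComplex.homologyMap_id, HomologicalComplex.homologyMap_zero] at h2
  exact LinearMap.congr_fun (congrArg ModuleCat.Hom.hom h2) x

variable {U V : Set X}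

lemma Cov.disj_inj (h : Cov U V) (hd : U ∩ V = ∅) {n : ℕ} {a : H U n} {b : H V n}
    (hab : hm (vl U) n a + hm (vl V) n b = 0) : a = 0 ∧ b = 0 := by
  have : IsEmpty ↑(U ∩ V) := Set.isEmpty_coe_sort.2 hd
  obtain ⟨c, hc, hc'⟩ := h.mid_exact (a := a) (b := -b) (by
    rw [map_neg]; exact eq_neg_of_add_eq_zero_left hab)
  rw [eq_zero_of_isEmpty c, map_zero] at hc hc'
  exact ⟨hc.symm, neg_eq_zero.1 hc'.symm⟩

lemma Cov.disj_surj (h : Cov U V) (hd : U ∩ V = ∅) {n : ℕ} (x : H X n) :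
    ∃ a b, x = hm (vl U) n a + hm (vl V) n b := by
  have : IsEmpty ↑(U ∩ V) := Set.isEmpty_coe_sort.2 hd
  cases n with
  | zero => exact h.exists_zero x
  | succ n => exact h.of_bdry_eq_zero (eq_zero_of_isEmpty _)

end

/-! ### Homology of a point -/

/-- The chain complex of a one-point space is the alternating constant complex. -/
noncomputable def pointIso (X : Type) [TopologicalSpace X] [Unique X] :
    FC.obj (TopCat.toSSet.obj (TopCat.of X)) ≅
      ChainComplex.alternatingConst.obj ((ModuleCat.free ℚ).obj (TopCat.of X)) :=
  have : TotallyDisconnectedSpace (TopCat.of X) :=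
    inferInstanceAs (TotallyDisconnectedSpace X)
  (alternatingFaceMapComplex _).mapIso
    (((SimplicialObject.whiskering _ _).obj (ModuleCat.free ℚ)).mapIso
    (TopCat.toSSetIsoConst (TopCat.of X)) ≪≫ Functor.constComp _ _ _) ≪≫
    alternatingFaceMapComplexConst.app _

lemma rank_point (X : Type) [TopologicalSpace X] [Unique X] (n : ℕ) :
    Module.rank ℚ (H X n) = if n = 0 then 1 else 0 := by
  split_ifs with hn
  · subst hn
    have e := (((HomologicalComplex.homologyFunctor _ _ 0).mapIso (pointIso X)) ≪≫
      ChainComplex.alternatingConstHomologyZero _).toLinearEquiv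
    refine e.rank_eq.trans ?_
    change Module.rank ℚ (X →₀ ℚ) = 1
    simp
  · have h := ((ChainComplex.alternatingConst_exactAt _ _ hn).of_iso
      (pointIso X).symm).isZero_homology
    have := ModuleCat.subsingleton_of_isZero h
    exact rank_subsingleton' _ _


/-! ### Quotients by involutions -/

section quo
variable {X Q E E' : Type} [TopologicalSpace X] [TopologicalSpace Q] [TopologicalSpace E']
  [TopologicalSpace E]

/-- The map `q` is the quotient map of a space by the involution `σ`. -/
structure IsQuo (σ : C(X, X)) (q : C(X, Q)) : Prop where
  inv : ∀ x, σ (σ x) = x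
  oq : IsOpenQuotientMap q
  eq_iff : ∀ x y, q x = q y ↔ y = x ∨ y = σ x

lemma IsQuo.map_σ {σ : C(X, X)} {q : C(X, Q)} (h : IsQuo σ q) (x : X) : q (σ x) = q x :=
  ((h.eq_iff _ _).2 (Or.inr rfl)).symm

/-- A deformation retraction induces isomorphisms on homology. -/
lemma bij_of_retract (f : C(E, X)) (s : C(X, E)) (hs : ∀ x, f (s x) = x) (F : C(unitInterval × E, E))
    (F0 : ∀ e, F (0, e) = s (f e)) (F1 : ∀ e, F (1, e) = e) (n : ℕ) :
    Function.Bijective (hm f n) := by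
  refine hm_bijective_of_homotopy f s ?_ ?_ n
  · rw [show f.comp s = ContinuousMap.id X from ContinuousMap.ext hs]
  · exact ⟨⟨F, F0, F1⟩⟩

lemma exists_lift {q : C(X, Q)} (hq : Topology.IsQuotientMap q) (g : C(X, E))
    (hg : ∀ x y, q x = q y → g x = g y) : ∃ s : C(Q, E), ∀ x, s (q x) = g x :=
  ⟨hq.lift g (fun x y => hg x y), fun x =>
    DFunLike.congr_fun (hq.lift_comp g fun x y => hg x y) x⟩

/-- An equivariant deformation retraction induces isomorphisms on the homology of the
quotients by the involutions. -/
lemma IsQuo.bij_of_retract {σ : C(X, X)} {q : C(X, Q)} {τ : C(E, E)} {p : C(E, E')}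
    (hp : IsQuo τ p) (hq : IsQuo σ q) (f : C(E, X)) (f' : C(E', Q)) (hf : ∀ e, f' (p e) = q (f e))
    (s : C(X, E)) (hs : ∀ x, f (s x) = x) (hsσ : ∀ x, s (σ x) = τ (s x))
    (F : C(unitInterval × E, E)) (F0 : ∀ e, F (0, e) = s (f e)) (F1 : ∀ e, F (1, e) = e)
    (Fτ : ∀ (t : unitInterval) e, F (t, τ e) = τ (F (t, e))) (n : ℕ) :
    Function.Bijective (hm f' n) := by
  have h1 : Topology.IsQuotientMap q := hq.oq.isQuotientMap
  have h2 : IsOpenQuotientMap (Prod.map id p : unitInterval × E → unitInterval × E') :=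
    IsOpenQuotientMap.id.prodMap hp.oq
  obtain ⟨s', hs'⟩ := exists_lift h1 (p.comp s) (fun x y h => by
    rcases (hq.eq_iff x y).1 h with rfl | rfl
    · rfl
    · exact ((congrArg p (hsσ x)).trans (hp.map_σ _)).symm)
  replace hs' (x : X) : s' (q x) = p (s x) := hs' x
  let k : C(unitInterval × E, unitInterval × E') := ⟨_, h2.continuous⟩
  have h3 : Topology.IsQuotientMap k := h2.isQuotientMap
  obtain ⟨F', hF'⟩ := exists_lift h3 (p.comp F) (fun x y h => by
    obtain ⟨t, x⟩ := x
    obtain ⟨t', y⟩ := y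
    obtain rfl : t = t' := congrArg Prod.fst h
    rcases (hp.eq_iff x y).1 (congrArg Prod.snd h) with rfl | rfl
    · rfl
    · exact ((congrArg p (Fτ t x)).trans (hp.map_σ _)).symm)
  replace hF' (t : unitInterval) (x : E) : F' (t, p x) = p (F (t, x)) := hF' (t, x)
  refine TorusConj.bij_of_retract f' s' (fun y => ?_) F' (fun y => ?_) (fun y => ?_) n
  · obtain ⟨x, rfl⟩ := hq.oq.surjective y
    rw [hs', hf, hs]
  · obtain ⟨x, rfl⟩ := hp.oq.surjective y
    rw [hF', F0, hf, hs']
  · obtain ⟨x, rfl⟩ := hp.oq.surjective y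
    rw [hF', F1]

/-- An invariant subspace has as quotient its image in the quotient. -/
lemma IsQuo.restrict {σ : C(X, X)} {q : C(X, Q)} (h : IsQuo σ q) {U : Set X}
    (hU : ∀ x ∈ U, σ x ∈ U) {U' : Set Q} (hU' : ∀ x, q x ∈ U' ↔ x ∈ U) :
    IsQuo (rs σ hU) (rs q (fun x hx => (hU' x).2 hx) : C(U, U')) where
  inv x := Subtype.ext (h.inv _)
  oq := by
    obtain rfl : q ⁻¹' U' = U := Set.ext hU'
    refine ⟨?_, (rs q _).continuous, h.oq.isOpenMap.restrictPreimage U'⟩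
    rintro ⟨y, hy⟩
    obtain ⟨x, rfl⟩ := h.oq.surjective y
    exact ⟨⟨x, hy⟩, rfl⟩
  eq_iff x y := by
    rw [Subtype.ext_iff, Subtype.ext_iff, Subtype.ext_iff]
    exact h.eq_iff x.1 y.1

end quo

/-! ### Contractions of arcs of the circle -/

section circle

lemma circle_arg_lt {z : Circle} (hz : z ≠ -1) : |Complex.arg z| < Real.pi := by
  refine abs_lt.2 ⟨Complex.neg_pi_lt_arg _, lt_of_le_of_ne (Complex.arg_le_pi _) fun h => hz ?_⟩
  refine Circle.injective_arg ?_
  simpa using h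

lemma circle_slit {z : Circle} (hz : z ≠ -1) : (z : ℂ) ∈ Complex.slitPlane :=
  Complex.mem_slitPlane_iff_arg.2 ⟨(abs_lt.1 (circle_arg_lt hz)).2.ne, z.coe_ne_zero⟩

lemma circle_exp_ne {s : ℝ} (hs : |s| < Real.pi) : Circle.exp s ≠ -1 := by
  intro h
  have h1 := Circle.arg_exp (abs_lt.1 hs).1 (abs_lt.1 hs).2.le
  rw [h] at h1
  simp only [Circle.coe_neg, Circle.coe_one, Complex.arg_neg_one] at h1
  exact (abs_lt.1 hs).2.ne h1.symm

lemma circle_arg_inv {z : Circle} (hz : z ≠ -1) :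
    Complex.arg (z⁻¹ : Circle) = - Complex.arg z := by
  rw [Circle.coe_inv, Complex.arg_inv, if_neg (abs_lt.1 (circle_arg_lt hz)).2.ne]

lemma circle_im_pos {z : Circle} :
    0 < (z : ℂ).im ↔ 0 < Complex.arg z ∧ Complex.arg z < Real.pi := by
  refine ⟨fun h => ⟨?_, Complex.arg_lt_pi_iff.2 (Or.inr h.ne')⟩, fun h => ?_⟩
  · refine lt_of_le_of_ne (Complex.arg_nonneg_iff.2 h.le) fun h0 => ?_
    rw [Circle.arg_eq_zero.1 h0.symm] at h
    simp at h
  · rw [← Circle.exp_arg z, Circle.coe_exp, Complex.exp_ofReal_mul_I_im]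
    exact Real.sin_pos_of_pos_of_lt_pi h.1 h.2

lemma continuousOn_circle_arg : Continuous fun z : {z : Circle // z ≠ -1} => Complex.arg z.1 :=
  continuous_iff_continuousAt.2 fun z =>
    (Complex.continuousAt_arg (circle_slit z.2)).comp (f := fun z : {z : Circle // z ≠ -1} =>
      (z.1 : ℂ)) (by fun_prop : Continuous fun z : {z : Circle // z ≠ -1} => (z.1 : ℂ)).continuousAt

/-- The circle minus the antipode of `w = ±1` contracts to `w`, compatibly with conjugation. -/
lemma exists_contr (w : Circle) (hw : w⁻¹ = w) :
    ∃ K : C(unitInterval × {z : Circle // z ≠ -w}, {z : Circle // z ≠ -w}),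
      (∀ z, (K (0, z)).1 = w) ∧ (∀ z, K (1, z) = z) ∧
      ∀ t z z', z'.1 = z.1⁻¹ → (K (t, z')).1 = (K (t, z)).1⁻¹ := by
  have hne (z : {z : Circle // z ≠ -w}) : w⁻¹ * z.1 ≠ -1 := fun h => z.2 (by
    rw [inv_mul_eq_iff_eq_mul] at h
    rw [h, mul_neg, mul_one])
  refine ⟨⟨fun x => ⟨w * Circle.exp (x.1.1 * Complex.arg (w⁻¹ * x.2.1 : Circle)), ?_⟩, ?_⟩,
    fun z => ?_, fun z => ?_, fun t z z' h => ?_⟩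
  · intro h
    have h1 : Circle.exp (x.1.1 * Complex.arg (w⁻¹ * x.2.1 : Circle)) = -1 :=
      mul_left_cancel (h.trans (by rw [mul_neg, mul_one]))
    refine circle_exp_ne ?_ h1
    rw [abs_mul, abs_of_nonneg x.1.2.1]
    exact (mul_le_of_le_one_left (abs_nonneg _) x.1.2.2).trans_lt (circle_arg_lt (hne x.2))
  · refine Continuous.subtype_mk ?_ _
    refine continuous_const.mul (Circle.exp.continuous.comp
      ((continuous_subtype_val.comp continuous_fst).mul ?_))
    exact continuousOn_circle_arg.comp (f := fun x : unitInterval × {z : Circle // z ≠ -w} =>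
      (⟨w⁻¹ * x.2.1, hne x.2⟩ : {z : Circle // z ≠ -1})) (by fun_prop)
  · simp
  · refine Subtype.ext ?_
    change w * Circle.exp ((1 : ℝ) * _) = _
    rw [one_mul, Circle.exp_arg, mul_inv_cancel_left]
  · change w * Circle.exp _ = (w * Circle.exp _)⁻¹
    have e : w⁻¹ * z'.1 = (w⁻¹ * z.1)⁻¹ := by rw [h, mul_inv, inv_inv, hw]
    rw [mul_inv, ← Circle.exp_neg]
    refine congrArg₂ (fun (a : Circle) (s : ℝ) => a * Circle.exp s) hw.symm ?_
    change t.1 * Complex.arg (w⁻¹ * z'.1 : Circle) = -(t.1 * Complex.arg (w⁻¹ * z.1 : Circle))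
    rw [e, circle_arg_inv (hne z), mul_neg]

/-- The open upper half circle is contractible. -/
lemma exists_contr_half : ∃ w : Circle, 0 < (w : ℂ).im ∧
    ∃ K : C(unitInterval × {z : Circle // 0 < (z : ℂ).im}, {z : Circle // 0 < (z : ℂ).im}),
      (∀ z, (K (0, z)).1 = w) ∧ (∀ z, K (1, z) = z) := by
  have hne (z : {z : Circle // 0 < (z : ℂ).im}) : z.1 ≠ -1 := fun h => by
    have := z.2
    rw [h] at this
    simp at this
  have him (s : ℝ) (h0 : 0 < s) (h1 : s < Real.pi) : 0 < (Circle.exp s : ℂ).im := by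
    rw [Circle.coe_exp, Complex.exp_ofReal_mul_I_im]
    exact Real.sin_pos_of_pos_of_lt_pi h0 h1
  refine ⟨Circle.exp (Real.pi / 2), him _ (by positivity) (by linarith [Real.pi_pos]),
    ⟨fun x => ⟨Circle.exp ((1 - x.1.1) * (Real.pi / 2) + x.1.1 * Complex.arg x.2.1), ?_⟩, ?_⟩,
    fun z => ?_, fun z => ?_⟩
  · obtain ⟨h1, h2⟩ := circle_im_pos.1 x.2.2
    have hp := Real.pi_pos
    have ht := x.1.2.1
    have ht' := x.1.2.2
    have := (convex_Ioo (0 : ℝ) Real.pi) (x := Real.pi / 2) ⟨by linarith, by linarith⟩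
      (y := Complex.arg x.2.1) ⟨h1, h2⟩ (a := 1 - x.1.1) (b := x.1.1) (by linarith) ht (by ring)
    exact him _ this.1 this.2
  · refine Continuous.subtype_mk (Circle.exp.continuous.comp (Continuous.add (by fun_prop)
      ((continuous_subtype_val.comp continuous_fst).mul ?_))) _
    exact continuousOn_circle_arg.comp
      (f := fun x : unitInterval × {z : Circle // 0 < (z : ℂ).im} =>
      (⟨x.2.1, hne x.2⟩ : {z : Circle // z ≠ -1})) (by fun_prop)
  · simp
  · refine Subtype.ext ?_
    simp [Circle.exp_arg]

end circle


/-! ### The open cover of `X × S¹` and of its quotient -/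

section pieces
variable (X : Type) [TopologicalSpace X]

/-- The projection to `X`. -/
def pX : C(X × Circle, X) := ⟨Prod.fst, continuous_fst⟩

/-- The product of `X` with the circle minus the point `-w`. -/
def Up (w : Circle) : Set (X × Circle) := Set.ofPred fun z => z.2 ≠ -w

/-- The product of `X` with the circle minus the points `1` and `-1`. -/
abbrev WW : Set (X × Circle) := Up X 1 ∩ Up X (-1)

/-- The part of `WW X` over the open upper half circle. -/
def half : Set (WW X) := Set.ofPred fun z => 0 < (z.1.2 : ℂ).im

/-- The part of `WW X` over the open lower half circle. -/
def half' : Set (WW X) := Set.ofPred fun z => (z.1.2 : ℂ).im < 0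

lemma isOpen_Up (w : Circle) : IsOpen (Up X w) :=
  isOpen_ne.preimage continuous_snd

lemma cov : Cov (Up X 1) (Up X (-1)) where
  left := isOpen_Up X 1
  right := isOpen_Up X (-1)
  union := by
    refine Set.eq_univ_of_forall fun z => ?_
    by_contra h
    have h' : z.2 = -1 ∧ z.2 = - -1 :=
      ⟨not_not.1 fun h1 => h (Or.inl h1), not_not.1 fun h1 => h (Or.inr h1)⟩
    have h2 : (-(-1 : Circle)) = -1 := h'.2.symm.trans h'.1
    exact Circle.neg_ne_self _ h2

lemma circle_of_im {z : Circle} (h : (z : ℂ).im = 0) : z = 1 ∨ z = -1 := by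
  have h1 := Circle.normSq_coe z
  rw [Complex.normSq_apply, h, mul_zero, add_zero] at h1
  rcases mul_self_eq_one_iff.1 h1 with h1 | h1
  · exact Or.inl (Circle.ext (Complex.ext (by simpa using h1) (by simpa using h)))
  · exact Or.inr (Circle.ext (Complex.ext (by simpa using h1) (by simpa using h)))

lemma covW : Cov (half X) (half' X) where
  left := isOpen_lt continuous_const (by fun_prop)
  right := isOpen_lt (by fun_prop) continuous_const
  union := by
    refine Set.eq_univ_of_forall fun z => ?_
    rcases lt_trichotomy (z.1.2 : ℂ).im 0 with h | h | h
    · exact Or.inr h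
    · rcases circle_of_im h with h | h
      · exact absurd (h.trans (neg_neg 1).symm) z.2.2
      · exact absurd h z.2.1
    · exact Or.inl h

lemma half_disj : half X ∩ half' X = ∅ :=
  Set.eq_empty_of_forall_notMem fun z h =>
    lt_asymm (a := 0) (b := (z.1.2 : ℂ).im) h.1 h.2

variable {X}

/-- The involution of `X × S¹` given by `σ` and complex conjugation. -/
noncomputable def tau (σ : C(X, X)) : C(X × Circle, X × Circle) := ⟨fun z => (σ z.1, z.2⁻¹), by fun_prop⟩

lemma inv_one' : (1 : Circle)⁻¹ = 1 := inv_one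

lemma inv_neg_one' : (-1 : Circle)⁻¹ = -1 := by
  rw [inv_eq_iff_mul_eq_one, neg_mul_neg, one_mul]

lemma tau_mem (σ : C(X, X)) {w : Circle} (hw : w⁻¹ = w) (z : X × Circle) (hz : z ∈ Up X w) :
    tau σ z ∈ Up X w := by
  have h1 : (-w)⁻¹ = -w := by
    rw [inv_eq_iff_mul_eq_one, neg_mul_neg]
    nth_rewrite 1 [← hw]
    exact inv_mul_cancel w
  intro h
  exact hz (inv_injective (h.trans h1.symm))

lemma tau_memW (σ : C(X, X)) (z : X × Circle) (hz : z ∈ WW X) : tau σ z ∈ WW X :=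
  ⟨tau_mem σ inv_one' z hz.1, tau_mem σ inv_neg_one' z hz.2⟩

/-- The involution on `WW X`. -/
noncomputable abbrev tW (σ : C(X, X)) : C(WW X, WW X) := rs (tau σ) (tau_memW σ)

lemma im_inv (z : Circle) : ((z⁻¹ : Circle) : ℂ).im = -(z : ℂ).im := by
  rw [Circle.coe_inv_eq_conj, Complex.conj_im]

/-- The deformation retraction of `Up X w` to `X × {w}`, equivariant for the involutions `tau σ`
and `σ`. -/
lemma exists_retract_Up {w : Circle} (hw : w⁻¹ = w) :
    ∃ (s : C(X, Up X w)) (F : C(unitInterval × Up X w, Up X w)),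
      (∀ x, (s x).1.1 = x) ∧ (∀ e, F (0, e) = s e.1.1) ∧ (∀ e, F (1, e) = e) ∧
      ∀ σ : C(X, X), (∀ x, s (σ x) = rs (tau σ) (tau_mem σ hw) (s x)) ∧
        ∀ t e, F (t, rs (tau σ) (tau_mem σ hw) e) = rs (tau σ) (tau_mem σ hw) (F (t, e)) := by
  obtain ⟨K, K0, K1, Ki⟩ := exists_contr w hw
  refine ⟨⟨fun x => ⟨(x, w), fun h => Circle.neg_ne_self w h.symm⟩, by fun_prop⟩,
    ⟨fun x => ⟨(x.2.1.1, (K (x.1, ⟨x.2.1.2, x.2.2⟩)).1), (K (x.1, ⟨x.2.1.2, x.2.2⟩)).2⟩,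
      by fun_prop⟩, fun x => rfl, fun e => ?_, fun e => ?_, fun σ => ⟨fun x => ?_, fun t e => ?_⟩⟩
  · exact Subtype.ext (Prod.ext rfl (K0 _))
  · exact Subtype.ext (Prod.ext rfl (congrArg Subtype.val (K1 _)))
  · exact Subtype.ext (Prod.ext rfl hw.symm)
  · exact Subtype.ext (Prod.ext rfl (Ki t _ _ rfl))

lemma bij_Up {w : Circle} (hw : w⁻¹ = w) (n : ℕ) :
    Function.Bijective (hm ((pX X).comp (vl (Up X w))) n) := by
  obtain ⟨s, F, hs, F0, F1, -⟩ := exists_retract_Up (X := X) hw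
  exact bij_of_retract _ s hs F F0 F1 n

lemma bij_half (n : ℕ) :
    Function.Bijective (hm ((pX X).comp ((vl (WW X)).comp (vl (half X)))) n) := by
  obtain ⟨w, hw, K, K0, K1⟩ := exists_contr_half
  have key (z : Circle) (hz : 0 < (z : ℂ).im) (x : X) : (x, z) ∈ WW X := by
    constructor
    · rintro (rfl : z = _); simp at hz
    · rintro (rfl : z = _); simp at hz
  refine bij_of_retract _ ⟨fun x => ⟨⟨(x, w), key w hw x⟩, hw⟩, by fun_prop⟩ (fun x => rfl)
    ⟨fun x => ⟨⟨(x.2.1.1.1, (K (x.1, ⟨x.2.1.1.2, x.2.2⟩)).1), key _ (K _).2 _⟩, (K _).2⟩,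
      by fun_prop⟩ (fun e => ?_) (fun e => ?_) n
  · exact Subtype.ext (Subtype.ext (Prod.ext rfl (K0 _)))
  · exact Subtype.ext (Subtype.ext (Prod.ext rfl (congrArg Subtype.val (K1 _))))

variable {σ : C(X, X)}

lemma tau_tau (hσ : ∀ x, σ (σ x) = x) (z : X × Circle) : tau σ (tau σ z) = z := Prod.ext (hσ _) (inv_inv _)

/-- The homology of `WW X` is the sum of the homology of its upper half and of the
image of the latter under the involution. -/
lemma half_decomp (hσ : ∀ x, σ (σ x) = x) (n : ℕ) :
    (∀ w : H (WW X) n, ∃ a b, w = hm (vl (half X)) n a + hm (tW σ) n (hm (vl (half X)) n b)) ∧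
    ∀ a b, hm (vl (half X)) n a + hm (tW σ) n (hm (vl (half X)) n b) = 0 → a = 0 ∧ b = 0 := by
  let t : C(half X, half' X) := rs (tW σ) (fun z hz => by
    change ((z.1.2⁻¹ : Circle) : ℂ).im < 0
    rw [im_inv]
    exact neg_neg_of_pos hz)
  let t' : C(half' X, half X) := rs (tW σ) (fun z hz => by
    change 0 < ((z.1.2⁻¹ : Circle) : ℂ).im
    rw [im_inv]
    exact neg_pos_of_neg hz)
  have ht := hm_bijective_of_homeo t t'
    (fun z => Subtype.ext (Subtype.ext (tau_tau hσ _)))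
    (fun z => Subtype.ext (Subtype.ext (tau_tau hσ _))) n
  have e (b : H (half X) n) : hm (tW σ) n (hm (vl (half X)) n b) =
      hm (vl (half' X)) n (hm t n b) := by
    rw [hm_hm, hm_hm]; rfl
  refine ⟨fun w => ?_, fun a b hab => ?_⟩
  · obtain ⟨a, b, rfl⟩ := (covW X).disj_surj (half_disj X) w
    obtain ⟨b, rfl⟩ := ht.2 b
    exact ⟨a, b, by rw [e]⟩
  · rw [e] at hab
    obtain ⟨h1, h2⟩ := (covW X).disj_inj (half_disj X) hab
    exact ⟨h1, ht.1 (h2.trans (map_zero _).symm)⟩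

variable {Q Y : Type} [TopologicalSpace Q] [TopologicalSpace Y] {q : C(X, Q)}
  {p : C(X × Circle, Y)}

/-- The image of `Up X w` in the quotient `Y` of `X × S¹` by `tau σ`. -/
def Uq (p : C(X × Circle, Y)) (w : Circle) : Set Y := p '' Up X w

lemma mem_Uq (hp : IsQuo (tau σ) p) {w : Circle} (hw : w⁻¹ = w) (z : X × Circle) :
    p z ∈ Uq p w ↔ z ∈ Up X w := by
  refine ⟨?_, fun h => ⟨z, h, rfl⟩⟩
  rintro ⟨z', hz', h⟩
  rcases (hp.eq_iff _ _).1 h with rfl | rfl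
  · exact hz'
  · exact tau_mem σ hw _ hz'

lemma covq (hp : IsQuo (tau σ) p) : Cov (Uq p 1) (Uq p (-1)) where
  left := hp.oq.isOpenMap _ (isOpen_Up X 1)
  right := hp.oq.isOpenMap _ (isOpen_Up X (-1))
  union := by
    rw [Uq, Uq, ← Set.image_union, (cov X).union, Set.image_univ]
    exact hp.oq.surjective.range_eq

/-- The equivariant contraction of `S¹ ∖ {-w}` to `w` shows that the image of `Up X w` has the
homology of `Q`. -/
lemma bij_Uq (hp : IsQuo (tau σ) p) (hq : IsQuo σ q) (r' : C(Y, Q))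
    (hr' : ∀ z, r' (p z) = q (pX X z)) {w : Circle} (hw : w⁻¹ = w) (n : ℕ) :
    Function.Bijective (hm (r'.comp (vl (Uq p w))) n) := by
  obtain ⟨s, F, hs, F0, F1, h⟩ := exists_retract_Up (X := X) hw
  exact (hp.restrict (tau_mem σ hw) (mem_Uq hp hw)).bij_of_retract hq
    ((pX X).comp (vl (Up X w))) _ (fun e => hr' e.1) s hs (h σ).1 F F0 F1 (h σ).2 n

lemma mem_Wq (z : X × Circle) (hz : z ∈ WW X) : p z ∈ Uq p 1 ∩ Uq p (-1) :=
  ⟨⟨z, hz.1, rfl⟩, ⟨z, hz.2, rfl⟩⟩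

/-- The quotient map sends the upper half homeomorphically onto the image of `WW X`, because the
involution swaps the two halves. -/
lemma bij_Wq (hp : IsQuo (tau σ) p) (n : ℕ) :
    Function.Bijective (hm ((rs p mem_Wq : C(WW X, ↑(Uq p 1 ∩ Uq p (-1)))).comp
      (vl (half X))) n) := by
  have hmem (z : X × Circle) : p z ∈ Uq p 1 ∩ Uq p (-1) ↔ z ∈ WW X :=
    and_congr (mem_Uq hp inv_one' z) (mem_Uq hp inv_neg_one' z)
  have hW := hp.restrict (tau_memW σ) hmem
  set f : C(half X, ↑(Uq p 1 ∩ Uq p (-1))) := (rs p mem_Wq).comp (vl (half X)) with hf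
  have hfo : IsOpenMap f := hW.oq.isOpenMap.comp (covW X).left.isOpenMap_subtype_val
  have hfb : Function.Bijective f := by
    refine ⟨fun a b h => ?_, fun y => ?_⟩
    · rcases (hW.eq_iff a.1 b.1).1 h with h | h
      · exact (Subtype.ext h).symm
      · have h1 : 0 < (b.1.1.2 : ℂ).im := b.2
        have h2 : 0 < (a.1.1.2 : ℂ).im := a.2
        rw [h] at h1
        change 0 < ((a.1.1.2⁻¹ : Circle) : ℂ).im at h1
        rw [im_inv] at h1
        linarith
    · obtain ⟨z, rfl⟩ := hW.oq.surjective y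
      rcases (covW X).union.symm ▸ Set.mem_univ z with h | h
      · exact ⟨⟨z, h⟩, rfl⟩
      · refine ⟨⟨tW σ z, ?_⟩, hW.map_σ z⟩
        change 0 < ((z.1.2⁻¹ : Circle) : ℂ).im
        rw [im_inv]
        exact neg_pos_of_neg h
  let e := (Equiv.ofBijective f hfb).toHomeomorphOfContinuousOpen f.continuous hfo
  exact hm_bijective_of_homeo f ⟨e.symm, e.symm.continuous⟩ (fun y => e.apply_symm_apply y)
    (fun x => e.symm_apply_apply x) n

end pieces

/-! ### From `X` to `X × S¹` -/

section step
variable {X : Type} [TopologicalSpace X]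

/-- A class on `WW X` killed by the projection to `X` is killed by the inclusions in both pieces of
the cover, as these have the homology of `X`. -/
lemma ic_eq_zero {n : ℕ} {c : H (WW X) n} (hc : hm ((pX X).comp (vl (WW X))) n c = 0) :
    hm (ic (Set.inter_subset_left : WW X ⊆ Up X 1)) n c = 0 ∧
      hm (ic (Set.inter_subset_right : WW X ⊆ Up X (-1))) n c = 0 := by
  constructor
  · refine (bij_Up inv_one' n).1 ?_
    rw [map_zero, hm_hm]
    exact hc
  · refine (bij_Up inv_neg_one' n).1 ?_
    rw [map_zero, hm_hm]
    exact hc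

/-- Both pieces of the cover and the upper half have the homology of `X`, so a class supported on
`Up X 1` can be moved to `Up X (-1)` through the upper half. -/
lemma sum_eq_zero {n : ℕ} {u : H (Up X 1) n} {v : H (Up X (-1)) n}
    (h : hm (pX X) n (hm (vl (Up X 1)) n u + hm (vl (Up X (-1))) n v) = 0) :
    hm (vl (Up X 1)) n u + hm (vl (Up X (-1))) n v = 0 := by
  obtain ⟨a, ha⟩ := (bij_half (X := X) n).2 (hm ((pX X).comp (vl (Up X 1))) n u)
  have h1 : hm ((ic (Set.inter_subset_left : WW X ⊆ Up X 1)).comp (vl (half X))) n a = u :=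
    (bij_Up inv_one' n).1 (by rw [hm_hm, ← ha]; rfl)
  have h2 : hm (vl (Up X 1)) n u = hm (vl (Up X (-1))) n
      (hm ((ic (Set.inter_subset_right : WW X ⊆ Up X (-1))).comp (vl (half X))) n a) := by
    rw [← h1, hm_hm, hm_hm]; rfl
  rw [h2, ← map_add] at h ⊢
  rw [hm_hm] at h
  rw [(bij_Up inv_neg_one' n).1 (h.trans (map_zero _).symm), map_zero]

lemma eq_zero_of_bdry {n : ℕ} {e : H (X × Circle) (n + 1)} (h1 : (cov X).bdry n e = 0)
    (h2 : hm (pX X) (n + 1) e = 0) : e = 0 := by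
  obtain ⟨u, v, rfl⟩ := (cov X).of_bdry_eq_zero h1
  exact sum_eq_zero h2

lemma eq_zero_of_zero {e : H (X × Circle) 0} (h2 : hm (pX X) 0 e = 0) : e = 0 := by
  obtain ⟨u, v, rfl⟩ := (cov X).exists_zero e
  exact sum_eq_zero h2

lemma pX_bdry {n : ℕ} (e : H (X × Circle) (n + 1)) :
    hm ((pX X).comp (vl (WW X))) n ((cov X).bdry n e) = 0 := by
  have h := congrArg (hm ((pX X).comp (vl (Up X 1))) n) ((cov X).res_bdry e).1
  rw [hm_hm, map_zero] at h
  exact h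

lemma pX_surj (n : ℕ) : Function.Surjective (hm (pX X) n) := fun x => by
  obtain ⟨u, rfl⟩ := (bij_Up (X := X) inv_one' n).2 x
  exact ⟨hm (vl (Up X 1)) n u, hm_hm _ _ _ _⟩

variable {σ : C(X, X)}

lemma pX_tau (n : ℕ) (z : H (X × Circle) n) :
    hm (pX X) n (hm (tau σ) n z) = hm σ n (hm (pX X) n z) := by
  rw [hm_hm, hm_hm]; rfl

lemma pX_tW (n : ℕ) (z : H (WW X) n) :
    hm ((pX X).comp (vl (WW X))) n (hm (tW σ) n z) =
      hm σ n (hm ((pX X).comp (vl (WW X))) n z) := by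
  rw [hm_hm, hm_hm]; rfl

lemma bdry_tau {n : ℕ} (z : H (X × Circle) (n + 1)) :
    (cov X).bdry n (hm (tau σ) (n + 1) z) = hm (tW σ) n ((cov X).bdry n z) :=
  (cov X).nat (cov X) (tau σ) (tau_mem σ inv_one') (tau_mem σ inv_neg_one') z

variable {Q : Type} [TopologicalSpace Q] {q : C(X, Q)}

/-- The inductive hypothesis: the involution acts on `H_n` by `(-1)^n`, and the homology of the
quotient is the even part. -/
structure Good (σ : C(X, X)) (q : C(X, Q)) : Prop where
  quo : IsQuo σ q
  sign : ∀ n x, hm σ n x = (-1 : ℚ) ^ n • x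
  surj : ∀ n, Function.Surjective (hm q n)
  inj : ∀ n, Even n → ∀ x, hm q n x = 0 → x = 0

/-- If a class on `WW X`, written as the sum of `a` and the image of `b` under the involution, is
killed by the projection to `X`, then `b` is determined by `a`. -/
lemma half_rel (h : Good σ q) {n : ℕ} {a b : H (half X) n}
    (hab : hm ((pX X).comp (vl (WW X))) n
      (hm (vl (half X)) n a + hm (tW σ) n (hm (vl (half X)) n b)) = 0) :
    a + (-1 : ℚ) ^ n • b = 0 := by
  refine (bij_half (X := X) n).1 ?_
  rw [map_zero, map_add, map_smul, ← h.sign]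
  have e (c : H (half X) n) : hm ((pX X).comp (vl (WW X))) n (hm (vl (half X)) n c) =
      hm ((pX X).comp ((vl (WW X)).comp (vl (half X)))) n c := hm_hm _ _ _ _
  rwa [map_add, pX_tW, e, e] at hab

lemma tW_tW (h : Good σ q) {n : ℕ} (w : H (WW X) n) : hm (tW σ) n (hm (tW σ) n w) = w := by
  rw [hm_hm, show (tW σ).comp (tW σ) = ContinuousMap.id _ from
    ContinuousMap.ext fun z => Subtype.ext (tau_tau h.quo.inv z.1), hm_id]

lemma neg_one_mul_pow (n : ℕ) : (-1 : ℚ) ^ n * (-1 : ℚ) ^ n = 1 := by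
  rw [← mul_pow, neg_one_mul, neg_neg, one_pow]

/-- On classes killed by the projection, the involution of `WW X` acts by `(-1)^(n+1)`. -/
lemma tW_sign (h : Good σ q) {n : ℕ} {w : H (WW X) n}
    (hw : hm ((pX X).comp (vl (WW X))) n w = 0) : hm (tW σ) n w = (-1 : ℚ) ^ (n + 1) • w := by
  obtain ⟨a, b, rfl⟩ := (half_decomp h.quo.inv n).1 w
  have h1 := eq_neg_of_add_eq_zero_left (half_rel h hw)
  rw [h1, map_add, tW_tW h, map_neg, map_neg, map_smul, map_smul, smul_add, smul_neg, smul_smul,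
    pow_succ, mul_neg_one, neg_mul, neg_one_mul_pow, neg_smul, neg_neg, one_smul, neg_smul,
    add_comm]

lemma sign_step (h : Good σ q) (n : ℕ) (z : H (X × Circle) n) :
    hm (tau σ) n z = (-1 : ℚ) ^ n • z := by
  have h1 : hm (pX X) n (hm (tau σ) n z - (-1 : ℚ) ^ n • z) = 0 := by
    rw [map_sub, pX_tau, h.sign, map_smul, sub_self]
  refine sub_eq_zero.1 ?_
  cases n with
  | zero => exact eq_zero_of_zero h1
  | succ n =>
    refine eq_zero_of_bdry ?_ h1
    rw [map_sub, bdry_tau, map_smul, tW_sign h (pX_bdry z), sub_self]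

variable {Y : Type} [TopologicalSpace Y] {p : C(X × Circle, Y)}

/-- The restriction of the quotient map to `WW X`. -/
noncomputable abbrev pW (p : C(X × Circle, Y)) : C(WW X, ↑(Uq p 1 ∩ Uq p (-1))) := rs p mem_Wq

lemma pW_tW (hp : IsQuo (tau σ) p) {n : ℕ} (w : H (WW X) n) :
    hm (pW p) n (hm (tW σ) n w) = hm (pW p) n w := by
  rw [hm_hm, show (pW p).comp (tW σ) = pW p from
    ContinuousMap.ext fun z => Subtype.ext (hp.map_σ z.1)]

lemma bdry_p (hp : IsQuo (tau σ) p) {n : ℕ} (z : H (X × Circle) (n + 1)) :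
    (covq hp).bdry n (hm p (n + 1) z) = hm (pW p) n ((cov X).bdry n z) :=
  (cov X).nat (covq hp) p (fun z hz => ⟨z, hz, rfl⟩) (fun z hz => ⟨z, hz, rfl⟩) z

lemma exists_r' (hp : IsQuo (tau σ) p) (hq : IsQuo σ q) :
    ∃ r' : C(Y, Q), ∀ z, r' (p z) = q (pX X z) :=
  exists_lift hp.oq.isQuotientMap (q.comp (pX X)) (fun x y hxy => by
    rcases (hp.eq_iff _ _).1 hxy with rfl | rfl
    · rfl
    · exact (hq.map_σ _).symm)

/-- Classes on the pieces of the cover of the quotient lift to `X × S¹`, as they do from `Q` to `X`. -/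
lemma surj_Uq (h : Good σ q) (hp : IsQuo (tau σ) p) {w : Circle} (hw : w⁻¹ = w) (n : ℕ)
    (u : H (Uq p w) n) : ∃ z, hm (vl (Uq p w)) n u = hm p n z := by
  obtain ⟨r', hr'⟩ := exists_r' hp h.quo
  obtain ⟨x, hx⟩ := h.surj n (hm (r'.comp (vl (Uq p w))) n u)
  obtain ⟨v, rfl⟩ := (bij_Up hw n).2 x
  let pU : C(Up X w, Uq p w) := rs p (fun z hz => ⟨z, hz, rfl⟩)
  have h1 : u = hm pU n v := by
    refine (bij_Uq hp h.quo r' hr' hw n).1 (hx.symm.trans ?_)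
    rw [hm_hm, hm_hm]
    exact congrArg (fun f : C(Up X w, Q) => hm f n v) (ContinuousMap.ext fun e => (hr' e.1).symm)
  refine ⟨hm (vl (Up X w)) n v, ?_⟩
  rw [h1, hm_hm, hm_hm]
  rfl

/-- Let `a` be the class on the upper half corresponding to the boundary of `y`. In odd degree
the classes of `a` and of its conjugate cancel under projection to `X`, so half their sum is a
boundary whose image is that of `y`. In even degree `a = 0`, because its image in `Q` vanishes and
`H_n(X)` injects into `H_n(Q)`. Either way the boundary of `y` lifts, and what remains comes from
the pieces of the cover. -/
lemma surj_step (h : Good σ q) (hp : IsQuo (tau σ) p) (n : ℕ) :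
    Function.Surjective (hm p n) := by
  have key (u : H (Uq p 1) n) (v : H (Uq p (-1)) n) :
      ∃ z, hm p n z = hm (vl (Uq p 1)) n u + hm (vl (Uq p (-1))) n v := by
    obtain ⟨z, hz⟩ := surj_Uq h hp inv_one' n u
    obtain ⟨z', hz'⟩ := surj_Uq h hp inv_neg_one' n v
    exact ⟨z + z', by rw [map_add, hz, hz']⟩
  intro y
  cases n with
  | zero =>
    obtain ⟨u, v, rfl⟩ := (covq hp).exists_zero y
    exact key u v
  | succ n =>
    suffices hs : ∃ z, (covq hp).bdry n y = (covq hp).bdry n (hm p (n + 1) z) by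
      obtain ⟨z, hz⟩ := hs
      obtain ⟨u, v, huv⟩ := (covq hp).of_bdry_eq_zero (z := y - hm p (n + 1) z)
        (by rw [map_sub, hz, sub_self])
      obtain ⟨z', hz'⟩ := key u v
      exact ⟨z + z', by rw [map_add, hz', ← huv, add_sub_cancel]⟩
    obtain ⟨a, ha⟩ := (bij_Wq hp n).2 ((covq hp).bdry n y)
    rw [← hm_hm] at ha
    have hodd : Odd n ∨ a = 0 := by
      refine (Nat.even_or_odd n).symm.imp id fun hn => ?_
      obtain ⟨r', hr'⟩ := exists_r' hp h.quo
      refine (bij_half (X := X) n).1 ?_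
      rw [map_zero]
      refine h.inj n hn _ ?_
      have h1 := congrArg (hm (r'.comp (vl (Uq p 1))) n) ((covq hp).res_bdry y).1
      rw [← ha, hm_hm, hm_hm, hm_hm, map_zero] at h1
      rw [hm_hm, ← h1]
      exact congrArg (fun f : C(half X, Q) => hm f n a)
        (ContinuousMap.ext fun e => (hr' e.1.1).symm)
    rcases hodd with hn | rfl
    · obtain ⟨z, hz⟩ := (cov X).exists_bdry (c := (2⁻¹ : ℚ) • (hm (vl (half X)) n a +
          hm (tW σ) n (hm (vl (half X)) n a))) (ic_eq_zero (by
            rw [map_smul, map_add, pX_tW, h.sign, hn.neg_one_pow, neg_smul, one_smul,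
              add_neg_cancel, smul_zero])).1 (ic_eq_zero (by
            rw [map_smul, map_add, pX_tW, h.sign, hn.neg_one_pow, neg_smul, one_smul,
              add_neg_cancel, smul_zero])).2
      refine ⟨z, ?_⟩
      rw [bdry_p hp, hz, map_smul, map_add, pW_tW hp, ha, ← two_smul ℚ, smul_smul,
        inv_mul_cancel₀ two_ne_zero, one_smul]
    · refine ⟨0, ?_⟩
      rw [← ha, map_zero, map_zero, map_zero, map_zero]

/-- The projection of `z` to `X` vanishes by hypothesis on `q`, so `z` is determined by its boundary,
which has odd degree and has the form `a + τ a`; it maps to `2 a` in the quotient. -/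
lemma inj_step (h : Good σ q) (hp : IsQuo (tau σ) p) (n : ℕ) (hn : Even n)
    (z : H (X × Circle) n) (hz : hm p n z = 0) : z = 0 := by
  have h0 : hm (pX X) n z = 0 := by
    obtain ⟨r', hr'⟩ := exists_r' hp h.quo
    refine h.inj n hn _ ?_
    have h1 := congrArg (hm r' n) hz
    rw [hm_hm, map_zero] at h1
    rw [hm_hm, ← h1]
    exact congrArg (fun f : C(X × Circle, Q) => hm f n z) (ContinuousMap.ext fun e => (hr' e).symm)
  cases n with
  | zero => exact eq_zero_of_zero h0
  | succ n =>
    refine eq_zero_of_bdry ?_ h0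
    have hodd : Odd n := by
      rcases Nat.even_or_odd n with h | h
      · exact absurd hn (Nat.not_even_iff_odd.2 h.add_one)
      · exact h
    have h1 := pX_bdry z
    have h2 := (bdry_p hp z).symm.trans ((congrArg _ hz).trans (map_zero _))
    obtain ⟨a, b, hab⟩ := (half_decomp h.quo.inv n).1 ((cov X).bdry n z)
    rw [hab] at h1 h2 ⊢
    have h3 := half_rel h h1
    rw [map_add, pW_tW hp, ← map_add, ← map_add, hm_hm] at h2
    have h4 := (bij_Wq hp n).1 (h2.trans (map_zero _).symm)
    rw [hodd.neg_one_pow, neg_smul, one_smul, ← sub_eq_add_neg, sub_eq_zero] at h3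
    rw [h3, ← two_smul ℚ] at h4
    have h5 : b = 0 := (smul_eq_zero.1 h4).resolve_left two_ne_zero
    rw [h3, h5, map_zero, map_zero, add_zero]

lemma Good.step (h : Good σ q) (hp : IsQuo (tau σ) p) : Good (tau σ) p :=
  ⟨hp, sign_step h, surj_step h hp, inj_step h hp⟩

end step


/-! ### Dimensions -/

section ranks
variable {X : Type} [TopologicalSpace X] {σ : C(X, X)} {Q : Type} [TopologicalSpace Q]
  {q : C(X, Q)}

lemma Good.rank_zero (_h : Good σ q) : Module.rank ℚ (H (X × Circle) 0) = Module.rank ℚ (H X 0) :=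
  (LinearEquiv.ofBijective (hm (pX X) 0)
    ⟨(injective_iff_map_eq_zero _).2 fun _ => eq_zero_of_zero, pX_surj 0⟩).rank_eq

/-- The kernel of the projection `H_{n+1}(X × S¹) → H_{n+1}(X)` is isomorphic to `H_n(X)`: the
connecting map identifies it with the classes `a ± τ a`, for `a` in the upper half. -/
lemma Good.rank_succ (h : Good σ q) (n : ℕ) : Module.rank ℚ (H (X × Circle) (n + 1)) =
    Module.rank ℚ (H X (n + 1)) + Module.rank ℚ (H X n) := by
  rw [LinearMap.rank_eq_of_surjective (pX_surj (X := X) (n + 1))]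
  congr 1
  let φ : LinearMap.ker (hm (pX X) (n + 1)) →ₗ[ℚ] H (WW X) n :=
    (cov X).bdry n ∘ₗ (LinearMap.ker (hm (pX X) (n + 1))).subtype
  let ψ : H (half X) n →ₗ[ℚ] H (WW X) n :=
    hm (vl (half X)) n - (-1 : ℚ) ^ n • (hm (tW σ) n ∘ₗ hm (vl (half X)) n)
  have hψ (a : H (half X) n) : ψ a = hm (vl (half X)) n a +
      hm (tW σ) n (hm (vl (half X)) n (-((-1 : ℚ) ^ n • a))) := by
    rw [map_neg, map_neg, map_smul, map_smul, ← sub_eq_add_neg]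
    rfl
  have hφi : Function.Injective φ := by
    refine (injective_iff_map_eq_zero _).2 fun z hz => Subtype.ext ?_
    exact eq_zero_of_bdry hz z.2
  have hψi : Function.Injective ψ := by
    refine (injective_iff_map_eq_zero _).2 fun a ha => ?_
    rw [hψ] at ha
    exact ((half_decomp h.quo.inv n).2 _ _ ha).1
  have hr : LinearMap.range φ = LinearMap.range ψ := by
    refine le_antisymm ?_ ?_
    · rintro _ ⟨z, rfl⟩
      have h1 := pX_bdry z.1
      obtain ⟨a, b, hab⟩ := (half_decomp h.quo.inv n).1 ((cov X).bdry n z.1)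
      rw [hab] at h1
      have h3 := eq_neg_of_add_eq_zero_left (half_rel h h1)
      refine ⟨a, (hψ a).trans (Eq.trans ?_ hab.symm)⟩
      rw [h3, smul_neg, smul_smul, neg_one_mul_pow, one_smul, neg_neg]
    · rintro _ ⟨a, rfl⟩
      have h0 : hm ((pX X).comp (vl (WW X))) n (ψ a) = 0 := by
        rw [hψ, map_add, pX_tW, h.sign, map_neg, map_neg, map_smul, map_smul, smul_neg, smul_smul,
          neg_one_mul_pow, one_smul, add_neg_cancel]
      obtain ⟨z, hz⟩ := (cov X).exists_bdry (ic_eq_zero h0).1 (ic_eq_zero h0).2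
      obtain ⟨u, hu⟩ := (bij_Up (X := X) inv_one' (n + 1)).2 (hm (pX X) (n + 1) z)
      rw [← hm_hm] at hu
      refine ⟨⟨z - hm (vl (Up X 1)) (n + 1) u, ?_⟩, ?_⟩
      · rw [LinearMap.mem_ker, map_sub, hu, sub_self]
      · change (cov X).bdry n (z - _) = _
        rw [map_sub, (cov X).bdry_left, hz, sub_zero]
  rw [(LinearEquiv.ofInjective φ hφi).rank_eq, hr, ← (LinearEquiv.ofInjective ψ hψi).rank_eq]
  exact (LinearEquiv.ofBijective _ (bij_half (X := X) n)).rank_eq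

lemma Good.rank_even (h : Good σ q) {n : ℕ} (hn : Even n) :
    Module.rank ℚ (H Q n) = Module.rank ℚ (H X n) :=
  (LinearEquiv.ofBijective (hm q n)
    ⟨(injective_iff_map_eq_zero _).2 (h.inj n hn), h.surj n⟩).rank_eq.symm

/-- In odd degrees the involution acts by `-1` upstairs and trivially downstairs. -/
lemma Good.rank_odd (h : Good σ q) {n : ℕ} (hn : ¬ Even n) : Module.rank ℚ (H Q n) = 0 := by
  have key (y : H Q n) : y = 0 := by
    obtain ⟨x, rfl⟩ := h.surj n y
    have h1 : hm q n (hm σ n x) = hm q n x := by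
      rw [hm_hm, show q.comp σ = q from ContinuousMap.ext h.quo.map_σ]
    rw [h.sign, (Nat.not_even_iff_odd.1 hn).neg_one_pow, neg_smul, one_smul, map_neg] at h1
    have h2 : (2 : ℚ) • hm q n x = 0 := by
      rw [two_smul]
      nth_rewrite 1 [← h1]
      exact neg_add_cancel _
    exact (smul_eq_zero.1 h2).resolve_left two_ne_zero
  have : Subsingleton (H Q n) := ⟨fun a b => (key a).trans (key b).symm⟩
  exact rank_subsingleton' _ _

/-- Transport of the inductive hypothesis along an equivariant homeomorphism. -/
lemma Good.transfer (h : Good σ q) {E : Type} [TopologicalSpace E] (e : E ≃ₜ X) {τ : C(E, E)}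
    (hτ : ∀ x, e (τ x) = σ (e x)) {q' : C(E, Q)} (hq' : IsQuo τ q') (hqe : ∀ x, q' x = q (e x)) :
    Good τ q' := by
  let f : C(E, X) := ⟨e, e.continuous⟩
  have hf (n : ℕ) : Function.Bijective (hm f n) := hm_bijective_of_homeo f
    ⟨e.symm, e.symm.continuous⟩ (fun y => e.apply_symm_apply y) (fun x => e.symm_apply_apply x) n
  have hq (n : ℕ) (x : H E n) : hm q' n x = hm q n (hm f n x) := by
    rw [hm_hm, show q' = q.comp f from ContinuousMap.ext hqe]
  refine ⟨hq', fun n x => (hf n).1 ?_, fun n y => ?_, fun n hn x hx => (hf n).1 ?_⟩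
  · rw [map_smul, ← h.sign, hm_hm, hm_hm, show f.comp τ = σ.comp f from ContinuousMap.ext hτ]
  · obtain ⟨z, rfl⟩ := h.surj n y
    obtain ⟨x, rfl⟩ := (hf n).2 z
    exact ⟨x, hq n x⟩
  · rw [map_zero]
    exact h.inj n hn _ ((hq n x).symm.trans hx)

end ranks

/-! ### Tori -/

/-- Conjugation on the torus. -/
noncomputable def conjT (k : ℕ) : C(Fin k → Circle, Fin k → Circle) :=
  ⟨fun x i => (x i)⁻¹, by fun_prop⟩

/-- The quotient map of the torus by conjugation. -/
def quoT (k : ℕ) : C(Fin k → Circle, Quotient (torusConjSetoid k)) :=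
  ⟨Quotient.mk _, continuous_quotient_mk'⟩

lemma quoT_eq_iff (k : ℕ) (x y : Fin k → Circle) :
    quoT k x = quoT k y ↔ y = x ∨ y = conjT k x :=
  Quotient.eq (r := torusConjSetoid k)

lemma conjT_conjT (k : ℕ) (x : Fin k → Circle) : conjT k (conjT k x) = x :=
  funext fun _ => inv_inv _

lemma isQuo_T (k : ℕ) : IsQuo (conjT k) (quoT k) where
  inv := conjT_conjT k
  eq_iff := quoT_eq_iff k
  oq := by
    refine ⟨Quotient.mk_surjective, (quoT k).continuous, fun U hU => ?_⟩
    have hq : Topology.IsQuotientMap (quoT k) := isQuotientMap_quotient_mk'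
    refine hq.isOpen_preimage.1 ?_
    have : quoT k ⁻¹' (quoT k '' U) = U ∪ conjT k ⁻¹' U := by
      ext x
      constructor
      · rintro ⟨y, hy, hxy⟩
        rcases (quoT_eq_iff k y x).1 hxy with rfl | rfl
        · exact Or.inl hy
        · exact Or.inr (by rw [Set.mem_preimage, conjT_conjT]; exact hy)
      · rintro (hx | hx)
        · exact ⟨x, hx, rfl⟩
        · exact ⟨conjT k x, hx, ((quoT_eq_iff k _ _).2 (Or.inr rfl)).symm⟩
    rw [this]
    exact hU.union (hU.preimage (conjT k).continuous)

/-- The torus of dimension `k + 1` is a product. -/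
noncomputable def splitT (k : ℕ) : (Fin (k + 1) → Circle) ≃ₜ (Fin k → Circle) × Circle where
  toFun x := (fun i => x i.castSucc, x (Fin.last k))
  invFun z := Fin.snoc (α := fun _ => Circle) z.1 z.2
  left_inv x := Fin.snoc_init_self x
  right_inv z := by simp
  continuous_toFun := by fun_prop
  continuous_invFun := by
    refine continuous_pi fun i => ?_
    refine Fin.lastCases ?_ (fun i => ?_) i
    · simpa using continuous_snd
    · simp only [Fin.snoc_castSucc]
      exact (continuous_apply i).comp continuous_fst

lemma good_T (k : ℕ) : Good (conjT k) (quoT k) ∧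
    ∀ n, Module.rank ℚ (H (Fin k → Circle) n) = (k.choose n : Cardinal) := by
  induction k with
  | zero =>
    have hq (n : ℕ) : Function.Bijective (hm (quoT 0) n) :=
      hm_bijective_of_homeo (quoT 0) (ContinuousMap.const _ default)
        (fun y => by
          obtain ⟨x, rfl⟩ := (isQuo_T 0).oq.surjective y
          exact congrArg _ (Subsingleton.elim _ _))
        (fun x => Subsingleton.elim _ _) n
    refine ⟨⟨isQuo_T 0, fun n x => ?_, fun n => ?_, fun n _ x hx => ?_⟩, fun n => ?_⟩
    · rw [show conjT 0 = ContinuousMap.id _ from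
        ContinuousMap.ext fun _ => Subsingleton.elim _ _, hm_id]
      rcases eq_or_ne n 0 with rfl | hn
      · rw [pow_zero, one_smul]
      · have : Subsingleton (H (Fin 0 → Circle) n) := by
          have h := rank_point (Fin 0 → Circle) n
          rw [if_neg hn] at h
          exact rank_zero_iff.1 h
        exact Subsingleton.elim _ _
    · exact (hq n).2
    · exact (hq n).1 (hx.trans (map_zero _).symm)
    · rw [rank_point]
      cases n <;> simp
  | succ k ih =>
    obtain ⟨h, hr⟩ := ih
    let p : C((Fin k → Circle) × Circle, Quotient (torusConjSetoid (k + 1))) :=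
      (quoT (k + 1)).comp ⟨(splitT k).symm, (splitT k).symm.continuous⟩
    have hs (x : Fin (k + 1) → Circle) :
        splitT k (conjT (k + 1) x) = tau (conjT k) (splitT k x) := rfl
    have hs' (z : (Fin k → Circle) × Circle) :
        (splitT k).symm (tau (conjT k) z) = conjT (k + 1) ((splitT k).symm z) := by
      rw [Homeomorph.symm_apply_eq, hs, Homeomorph.apply_symm_apply]
    have hp : IsQuo (tau (conjT k)) p :=
      { inv := tau_tau h.quo.inv
        oq := (isQuo_T (k + 1)).oq.comp (splitT k).symm.isOpenQuotientMap
        eq_iff := fun x y => by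
          refine ((isQuo_T (k + 1)).eq_iff _ _).trans (or_congr ?_ ?_)
          · exact (splitT k).symm.injective.eq_iff
          · refine Iff.trans (Eq.congr_right (hs' x).symm) ?_
            exact (splitT k).symm.injective.eq_iff }
    refine ⟨(h.step hp).transfer (splitT k) hs (isQuo_T (k + 1)) fun x => ?_, fun n => ?_⟩
    · exact congrArg _ ((splitT k).symm_apply_apply x).symm
    · have e := (LinearEquiv.ofBijective _ (hm_bijective_of_homeo
        (⟨splitT k, (splitT k).continuous⟩ : C(_, _)) ⟨(splitT k).symm, (splitT k).symm.continuous⟩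
        (fun y => (splitT k).apply_symm_apply y) (fun x => (splitT k).symm_apply_apply x)
        n)).rank_eq
      rw [e]
      cases n with
      | zero => rw [h.rank_zero, hr]; simp
      | succ n =>
        rw [h.rank_succ, hr, hr, Nat.choose_succ_succ, Nat.cast_add, add_comm]

end TorusConj

/-- Let `k ≥ 1` and let `ℤ/2` act on `𝕋^k = (S¹)^k ⊆ ℂ^k` by coordinatewise
complex conjugation.  The reduced rational homology of `𝕋^k/(ℤ/2)` has dimension
`binomial (k, d)` when `d` is even with `0 < d ≤ k`, and vanishes otherwise.  Equivalently
(in terms of unreduced homology): `dim H₀ = 1`, and for `d > 0` the dimension of `H_d` is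
`binomial (k, d)` if `d` is even and `0` otherwise. -/
theorem homology_torus_mod_conj (k : ℕ) (hk : 1 ≤ k) (d : ℕ) :
    Module.rank ℚ (singularHomology (TopCat.of (Quotient (torusConjSetoid k))) d) =
      if d = 0 then 1 else if Even d then (k.choose d : Cardinal) else 0 := by
  change Module.rank ℚ (TorusConj.H (Quotient (torusConjSetoid k)) d) = _
  obtain ⟨h, hr⟩ := TorusConj.good_T k
  split_ifs with h0 he
  · subst h0
    rw [h.rank_even Even.zero, hr]
    simp
  · rw [h.rank_even he, hr]
  · exact h.rank_odd he
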